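/- For the family C_m of lifted extended quadratic residue codes of length 24 modulo 2^m, let A_{3,2} := 2^{−24}·swe_{C_5}(x_0, x_1, x_2, z−y_1, z+y_1−2y_0, z+y_1+2y_0) ∈ ℚ[x_0,x_1,x_2,y_0,y_1,z]. Then the sum of those monomials of A_{3,2} that are divisible by x_0·y_0 equals D_{3,2} = 97152·x_0^8·y_0^8·(−x_1^4·y_1^2·z^2 + 2·x_1^4·x_2·y_1^2·z − x_1^4·x_2^2·y_1^2 + x_1^4·y_1^4 − x_1^2·x_2^2·y_1^4). -/

import Mathlib

/-!
The code is replaced by the row space of an explicit systematic matrix `M = [I | B]` modulo `32`: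
over `ℤ/2ℤ` the polynomial `g` is one of two explicit factors of `X ^ 23 - 1`, the Hensel lift is
unique because coprimality lifts along the nilpotent ideal `(2)`, and up to a permutation of the
coordinates both lifts generate the row space of `M` (`generator_eq`, `exists_perm`). The
enumerator is insensitive to the permutation (`aeval_swe_eq`).

After the substitution, the variable attached to `a : ℤ/32ℤ` is a function of `a` which expands as
`∑ b : ℤ/4ℤ, psi a b`, where `psi (a + 8 * s) b = I ^ (s * b) * psi a b` and every `psi a b` is a
constant times a single variable (`map_phi`). The substituted enumerator is therefore the sum of
the products `Psi c b` over codewords `c` and vectors `b` modulo `4`. The variable `X 0` occurs in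
`Psi c b` only if `c` has an odd coordinate, and `X 3` only if `b` has one, so the monomials in
question come exactly from such pairs (`coeff_sum_Psi`). Summing over the translates of `c` by
`8` times the code kills all `b` outside the dual code modulo `4` and produces the factor `4 ^ 12`
for the others (`Four_dual`, `Four_eq`).

The remaining sum is organised by the reduction of `b` modulo `2`, a nonzero word of the binary
Golay code (`total_eq`, `S_W`). It is invariant under the cyclic shift and the multiplier `2`
(`S_sigma`, `S_tau`), so it suffices to treat 19 representatives of the orbits. For these
the sum is evaluated by a search over coefficient vectors which uses that `Psi c b` vanishes
as soon as some coordinate has `c` not divisible by `8` and `b` nonzero, and which is carried out by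
the kernel on vectors packed into natural numbers (`search_spec`). Only the 759 octads contribute,
each with `128 * X 0 ^ 8 * X 3 ^ 8 * (…)`, and `759 * 128 = 97152` (`total`, `divPart_sum_phi`).
-/

open MvPolynomial
open scoped Classical

noncomputable section

/-- The symmetrized weight enumerator of a code `C ⊆ (ℤ/Nℤ)^n` (for `N = p^m`):
the variable `X i` for `i < m` records the number of coordinates of `p`-adic valuation `i`,
and the last variable `X m` (the variable `z`) records the number of zero coordinates. -/
def swe (p m : ℕ) {N n : ℕ} [NeZero N]
    (C : Submodule (ZMod N) (Fin n → ZMod N)) : MvPolynomial (Fin (m + 1)) ℚ :=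
  ∑ c : Fin n → ZMod N, if c ∈ C then
      (∏ i : Fin m, (X (Fin.castSucc i) : MvPolynomial (Fin (m + 1)) ℚ) ^
          (Finset.univ.filter fun j => c j ≠ 0 ∧ padicValNat p (c j).val = (i : ℕ)).card)
        * (X (Fin.last m) : MvPolynomial (Fin (m + 1)) ℚ) ^
            (Finset.univ.filter fun j => c j = 0).card
    else 0

/-- `g` is a monic irreducible degree-11 factor of `x^23 - 1` over `ℤ/pℤ`. -/
def IsQRFactor (p : ℕ) (g : Polynomial (ZMod p)) : Prop :=
  g.Monic ∧ g.natDegree = 11 ∧ Irreducible g ∧ g ∣ (Polynomial.X ^ 23 - 1)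

/-- `gm` is the (Hensel) lift of `g` to `ℤ/Nℤ` and `C` is the associated lifted extended
cyclic quadratic residue code of length 24: the extension by an overall parity check of the
cyclic code of length 23 generated by `gm`. -/
def IsLiftedQR {p N : ℕ} (hpN : p ∣ N) (g : Polynomial (ZMod p)) (gm : Polynomial (ZMod N))
    (C : Submodule (ZMod N) (Fin 24 → ZMod N)) : Prop :=
  gm.Monic ∧ gm.natDegree = 11 ∧ gm ∣ (Polynomial.X ^ 23 - 1) ∧
    gm.map (ZMod.castHom hpN (ZMod p)) = g ∧
    ∀ c : Fin 24 → ZMod N, c ∈ C ↔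
      ((∃ f : Polynomial (ZMod N), ∀ j : Fin 23,
          c (Fin.castSucc j) = ((f * gm) %ₘ (Polynomial.X ^ 23 - 1)).coeff (j : ℕ)) ∧
        c (Fin.last 23) = - ∑ j : Fin 23, c (Fin.castSucc j))

/-- The sum of those monomials of `A` that are divisible by `X i * X j`. -/
def divPart {σ : Type*} (A : MvPolynomial σ ℚ) (i j : σ) : MvPolynomial σ ℚ :=
  ∑ d ∈ A.support.filter (fun d => d i ≠ 0 ∧ d j ≠ 0), monomial d (A.coeff d)

namespace QR24

/-! ### Packed vectors and binary sums -/

/-- The base in which vectors of natural numbers are packed into a single number. -/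
abbrev base : ℕ := 65536

/-- The first `n` entries of `f`, packed into one natural number in base `B`. -/
def pk (B : ℕ) : ℕ → (ℕ → ℕ) → ℕ
  | 0, _ => 0
  | n + 1, f => f 0 + B * pk B n (fun j => f (j + 1))

lemma pk_add (B n : ℕ) (f g : ℕ → ℕ) : pk B n (f + g) = pk B n f + pk B n g := by
  induction n generalizing f g with
  | zero => rfl
  | succ n ih =>
    have := ih (fun j => f (j + 1)) (fun j => g (j + 1))
    simp only [pk, Pi.add_apply] at this ⊢
    rw [show (fun j => f (j + 1) + g (j + 1)) = (fun j => f (j + 1)) + fun j => g (j + 1) from rfl,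
      this]
    ring

lemma pk_smul (B n : ℕ) (k : ℕ) (f : ℕ → ℕ) : pk B n (k • f) = k * pk B n f := by
  induction n generalizing f with
  | zero => rfl
  | succ n ih =>
    have := ih (fun j => f (j + 1))
    simp only [pk, Pi.smul_apply, smul_eq_mul] at this ⊢
    rw [show (fun j => k * f (j + 1)) = k • (fun j => f (j + 1)) from rfl, this]
    ring

lemma pk_mod {B n : ℕ} {f : ℕ → ℕ} (h : f 0 < B) : pk B (n + 1) f % B = f 0 := by
  simp [pk, Nat.mod_eq_of_lt h]

lemma pk_div {B n : ℕ} {f : ℕ → ℕ} (h : f 0 < B) :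
    pk B (n + 1) f / B = pk B n (fun j => f (j + 1)) := by
  have : 0 < B := by omega
  simp only [pk]
  rw [Nat.add_mul_div_left _ _ this, Nat.div_eq_of_lt h, zero_add]

lemma pk_div_pow {B : ℕ} (m n : ℕ) {f : ℕ → ℕ} (h : ∀ j, f j < B) :
    pk B (m + n) f / B ^ m = pk B n (fun j => f (m + j)) := by
  induction m generalizing f with
  | zero => simp
  | succ m ih =>
    rw [pow_succ', ← Nat.div_div_eq_div_mul, show m + 1 + n = (m + n) + 1 by ring,
      pk_div (h 0), ih (fun j => h (j + 1))]
    congr 1; ext j; congr 1; ring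

lemma pk_digit {B n : ℕ} {f : ℕ → ℕ} (h : ∀ j, f j < B) {j : ℕ} (hj : j < n) :
    pk B n f / B ^ j % B = f j := by
  obtain ⟨k, rfl⟩ := Nat.exists_eq_add_of_lt hj
  rw [show j + k + 1 = j + (k + 1) by ring, pk_div_pow j (k + 1) h]
  exact pk_mod (h j)

lemma pk_congr {B n : ℕ} {f g : ℕ → ℕ} (h : ∀ j < n, f j = g j) : pk B n f = pk B n g := by
  induction n generalizing f g with
  | zero => rfl
  | succ n ih =>
    simp only [pk]
    rw [h 0 (by omega), ih (fun j hj => h (j + 1) (by omega))]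

lemma pk_eq_sum (B n : ℕ) (f : ℕ → ℕ) : pk B n f = ∑ j ∈ Finset.range n, f j * B ^ j := by
  induction n generalizing f with
  | zero => rfl
  | succ n ih =>
    simp only [pk]
    rw [Finset.sum_range_succ', ih, Finset.mul_sum]
    simp only [pow_zero, mul_one, pow_succ]
    rw [add_comm]
    congr 1
    exact Finset.sum_congr rfl fun j _ => by ring

/-- The sum of `f (a + s)` over all sums `s` of sublists of the given list. -/
def bsum {α β : Type*} [Add α] [Add β] (f : α → β) : List α → α → β
  | [], a => f a
  | r :: l, a => bsum f l a + bsum f l (a + r)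

/-- The sublist of those `R k`, `k < n`, for which `K k` holds. -/
def flt {α : Type*} : ℕ → (ℕ → Prop) → (ℕ → α) → List α
  | 0, _, _ => []
  | n + 1, K, R =>
    if K 0 then R 0 :: flt n (fun k => K (k + 1)) (fun k => R (k + 1))
    else flt n (fun k => K (k + 1)) (fun k => R (k + 1))

lemma flt_length {α : Type*} (n : ℕ) (K : ℕ → Prop) (R : ℕ → α) : (flt n K R).length ≤ n := by
  induction n generalizing K R with
  | zero => simp [flt]
  | succ n ih =>
    have := ih (fun k => K (k + 1)) (fun k => R (k + 1))
    simp only [flt]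
    split_ifs
    · simpa using this
    · omega

lemma flt_mem {α : Type*} (n : ℕ) (K : ℕ → Prop) (R : ℕ → α) :
    ∀ r ∈ flt n K R, ∃ k, r = R k := by
  induction n generalizing K R with
  | zero => simp [flt]
  | succ n ih =>
    have := ih (fun k => K (k + 1)) (fun k => R (k + 1))
    intro r hr
    simp only [flt] at hr
    split_ifs at hr
    · rcases List.mem_cons.1 hr with h | h
      · exact ⟨0, h⟩
      · obtain ⟨k, hk⟩ := this r h
        exact ⟨k + 1, hk⟩
    · obtain ⟨k, hk⟩ := this r hr
      exact ⟨k + 1, hk⟩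

/-- The value in `ℕ` of a bit. -/
def bv (b : Bool) : ℕ := cond b 1 0

/-- The linear combination of the first `n` rows of `R` with coefficients `w`. -/
def comb {n : ℕ} (w : Fin n → ℕ) (R : ℕ → ℕ → ℕ) : ℕ → ℕ := fun j => ∑ k, w k * R k j

lemma comb_cons {n : ℕ} (b : Bool) (w : Fin n → Bool) (R : ℕ → ℕ → ℕ) :
    comb (fun k => bv (Fin.cons (α := fun _ => Bool) b w k)) R
      = bv b • R 0 + comb (fun k => bv (w k)) (fun k => R (k + 1)) := by
  ext j
  simp [comb, Fin.sum_univ_succ]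

lemma sum_bits_succ {A : Type*} [AddCommMonoid A] {n : ℕ} (f : (Fin (n + 1) → Bool) → A) :
    ∑ w, f w = ∑ w, f (Fin.cons (α := fun _ => Bool) false w)
      + ∑ w, f (Fin.cons (α := fun _ => Bool) true w) := by
  rw [← (Fin.consEquiv (fun _ : Fin (n + 1) => Bool)).sum_comp, Fintype.sum_prod_type]
  simp [Fin.consEquiv, add_comm]

/-- A sum over bit vectors `w` is a binary sum over those rows `k` for which `w k = 1` does not
force the summand to vanish. -/
lemma sum_eq_bsum {A : Type*} [AddCommMonoid A] (n : ℕ) (f : (ℕ → ℕ) → A) (K : ℕ → Prop)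
    (R : ℕ → ℕ → ℕ) (a : ℕ → ℕ)
    (h : ∀ w : Fin n → Bool, ∀ k : Fin n, ¬ K k → w k = true →
      f (a + comb (fun k => bv (w k)) R) = 0) :
    ∑ w : Fin n → Bool, f (a + comb (fun k => bv (w k)) R) = bsum f (flt n K R) a := by
  induction n generalizing K R a with
  | zero =>
    have : ∀ w : Fin 0 → Bool, a + comb (fun k => bv (w k)) R = a := by
      intro w; ext j; simp [comb]
    simp [this, flt, bsum]
  | succ n ih =>
    rw [sum_bits_succ]
    have e0 : ∀ w : Fin n → Bool, a + comb (fun k => bv (Fin.cons (α := fun _ => Bool) false w k)) R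
        = a + comb (fun k => bv (w k)) (fun k => R (k + 1)) := by
      intro w; rw [comb_cons]; simp [bv]
    have e1 : ∀ w : Fin n → Bool, a + comb (fun k => bv (Fin.cons (α := fun _ => Bool) true w k)) R
        = a + R 0 + comb (fun k => bv (w k)) (fun k => R (k + 1)) := by
      intro w; rw [comb_cons]; simp [bv, add_assoc]
    simp only [e0, e1]
    rw [ih (fun k => K (k + 1)) (fun k => R (k + 1)) a]
    · by_cases h0 : K 0
      · rw [ih (fun k => K (k + 1)) (fun k => R (k + 1)) (a + R 0)]
        · simp [flt, h0, bsum]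
        · intro w k hk hw
          rw [← e1]
          exact h (Fin.cons (α := fun _ => Bool) true w) k.succ hk (by simpa using hw)
      · rw [Finset.sum_eq_zero, add_zero]
        · simp [flt, h0]
        · intro w _
          rw [← e1]
          exact h (Fin.cons (α := fun _ => Bool) true w) 0 h0 (by simp)
    · intro w k hk hw
      rw [← e0]
      exact h (Fin.cons (α := fun _ => Bool) false w) k.succ hk (by simpa using hw)

lemma flt_sum_le (n : ℕ) (K : ℕ → Prop) (R : ℕ → ℕ → ℕ) (j : ℕ) :
    ((flt n K R).map (· j)).sum ≤ ∑ k ∈ Finset.range n, R k j := by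
  induction n generalizing K R with
  | zero => simp [flt]
  | succ n ih =>
    have := ih (fun k => K (k + 1)) (fun k => R (k + 1))
    simp only [flt]
    rw [Finset.sum_range_succ']
    split_ifs
    · simp only [List.map_cons, List.sum_cons]; omega
    · omega

/-- Transfer of a graded relation through binary sums over packed vectors. -/
lemma bsum_rel {A : Type*} [AddCommMonoid A] (Rl : ℕ → ℕ → A → Prop)
    (hadd : ∀ k x y x' y', Rl k x y → Rl k x' y' → Rl (k + 1) (x + x') (y + y'))
    (f : ℕ → ℕ) (g : (ℕ → ℕ) → A) (l : List (ℕ → ℕ)) (a : ℕ → ℕ) (k : ℕ)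
    (h : ∀ x : ℕ → ℕ, (∀ j, a j ≤ x j) → (∀ j, x j ≤ a j + (l.map (· j)).sum) →
      Rl k (f (pk base 24 x)) (g x)) :
    Rl (k + l.length) (bsum f (l.map (pk base 24)) (pk base 24 a)) (bsum g l a) := by
  induction l generalizing a with
  | nil => exact h a (fun j => le_rfl) (fun j => by simp)
  | cons r l ih =>
    simp only [List.map_cons, bsum, List.length_cons]
    rw [← pk_add, ← add_assoc]
    refine hadd _ _ _ _ _ (ih a ?_) (ih (a + r) ?_)
    · intro x h0 h1
      refine h x h0 fun j => (h1 j).trans ?_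
      simp
    · intro x h0 h1
      refine h x (fun j => le_trans (by simp) (h0 j)) fun j => (h1 j).trans ?_
      simp [add_assoc]

/-! ### Functions evaluated by the kernel -/

/-- `f n`, with the argument brought to normal form first. -/
def strict (n : ℕ) (f : ℕ → ℕ) : ℕ := Nat.rec (f 0) (fun k _ => f (Nat.succ k)) n

lemma strict_eq (n : ℕ) (f : ℕ → ℕ) : strict n f = f n := by cases n <;> rfl

/-- `a` if `x = 0`, and `b` otherwise. -/
def sel (x a b : ℕ) : ℕ := Nat.rec a (fun _ _ => b) x

lemma sel_eq (x a b : ℕ) : sel x a b = if x = 0 then a else b := by cases x <;> simp [sel]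

/-- The function `bsum` on natural numbers. -/
def sbs (f : ℕ → ℕ) (l : List ℕ) : ℕ → ℕ :=
  List.rec (motive := fun _ => ℕ → ℕ) f
    (fun r _ ih a => Nat.add (ih a) (strict (Nat.add a r) ih)) l

lemma sbs_eq (f : ℕ → ℕ) (l : List ℕ) (a : ℕ) : sbs f l a = bsum f l a := by
  induction l generalizing a with
  | nil => rfl
  | cons r l ih =>
    have : sbs f (r :: l) a = Nat.add (sbs f l a) (strict (Nat.add a r) (sbs f l)) := rfl
    rw [this, strict_eq, bsum, ← ih, ← ih]; rfl

/-- Application of `g` to each of `n` packed entries. -/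
def fmp (g : ℕ → ℕ) (n : ℕ) : ℕ → ℕ :=
  Nat.rec (motive := fun _ => ℕ → ℕ) (fun _ => 0)
    (fun _ ih x => Nat.add (g (Nat.mod x 65536)) (Nat.mul 65536 (strict (Nat.div x 65536) ih))) n

lemma fmp_eq (g : ℕ → ℕ) (n : ℕ) (f : ℕ → ℕ) (h : ∀ j, f j < base) :
    fmp g n (pk base n f) = pk base n (fun j => g (f j)) := by
  induction n generalizing f with
  | zero => rfl
  | succ n ih =>
    have : fmp g (n + 1) (pk base (n + 1) f) = g (pk base (n + 1) f % 65536)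
        + 65536 * (strict (pk base (n + 1) f / 65536) (fmp g n)) := rfl
    rw [this, strict_eq, pk_mod (h 0), pk_div (h 0), ih _ (fun j => h (j + 1))]
    rfl

/-- The members of `rows` in whose place the packed vector `x` has an entry divisible by `m`. -/
def filt (m : ℕ) (rows : List ℕ) : ℕ → List ℕ :=
  List.rec (motive := fun _ => ℕ → List ℕ) (fun _ => [])
    (fun r _ ih x => Nat.rec (motive := fun _ => (ℕ → List ℕ) → List ℕ)
      (fun t => r :: t (Nat.div x 65536)) (fun _ _ t => t (Nat.div x 65536)) (Nat.mod x m) ih) rows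

lemma filt_eq (m n r : ℕ) (hr : r ≤ n) (hm : m ∣ base) (R : ℕ → ℕ → ℕ) (x : ℕ → ℕ)
    (h : ∀ j, x j < base) :
    filt m ((flt r (fun _ => True) R).map (pk base 24)) (pk base n x)
      = (flt r (fun k => x k % m = 0) R).map (pk base 24) := by
  induction r generalizing n R x with
  | zero => rfl
  | succ r ih =>
    obtain ⟨n, rfl⟩ : ∃ k, n = k + 1 := ⟨n - 1, by omega⟩
    have key := ih n (by omega) (fun k => R (k + 1)) (fun k => x (k + 1)) (fun j => h (j + 1))
    rw [← pk_div (h 0)] at key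
    have hx : pk base (n + 1) x % m = x 0 % m := by
      rw [← Nat.mod_mod_of_dvd _ hm, pk_mod (h 0)]
    have e : ∀ (y : ℕ) (l : List ℕ) (q : ℕ), filt m (q :: l) y
        = Nat.rec (motive := fun _ => (ℕ → List ℕ) → List ℕ)
      (fun t => q :: t (y / 65536)) (fun _ _ t => t (y / 65536)) (y % m) (filt m l) :=
      fun y l q => rfl
    simp only [flt, if_true, List.map_cons]
    rw [e, hx]
    split_ifs with h0
    · rw [h0, List.map_cons]
      exact congrArg _ key
    · obtain ⟨k, hk⟩ := Nat.exists_eq_succ_of_ne_zero h0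
      rw [hk]; exact key

/-- If the packed bit patterns of two vectors meet, they meet in one entry. -/
lemma land_pk {n : ℕ} {f g : ℕ → ℕ} (hf : ∀ j, f j < base) (hg : ∀ j, g j < base)
    (h : Nat.land (pk base n f) (pk base n g) ≠ 0) : ∃ j < n, f j &&& g j ≠ 0 := by
  induction n generalizing f g with
  | zero => exact absurd (by simp [pk, Nat.land]) h
  | succ n ih =>
    by_cases h0 : f 0 &&& g 0 = 0
    · have : Nat.land (pk base n fun j => f (j + 1)) (pk base n fun j => g (j + 1)) ≠ 0 := by
        intro h1
        apply h
        change pk base (n + 1) f &&& pk base (n + 1) g = 0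
        change (pk base n fun j => f (j + 1)) &&& (pk base n fun j => g (j + 1)) = 0 at h1
        have d : ∀ {f : ℕ → ℕ}, (∀ j, f j < base) → ∀ i, (pk base (n + 1) f).testBit i
            = if i < 16 then (f 0).testBit i
              else (pk base n fun j => f (j + 1)).testBit (i - 16) := by
          intro f hf i
          have := Nat.testBit_two_pow_mul_add (pk base n fun j => f (j + 1)) (i := 16) (hf 0) i
          simp only [pk]
          rw [add_comm]
          exact this
        apply Nat.eq_of_testBit_eq
        intro i
        have h0i := congrArg (Nat.testBit · i) h0
        have h1i := congrArg (Nat.testBit · (i - 16)) h1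
        simp only [Nat.testBit_and, Nat.zero_testBit] at h0i h1i ⊢
        rw [d hf, d hg]
        split_ifs <;> assumption
      obtain ⟨j, hj, hj'⟩ := ih (fun j => hf (j + 1)) (fun j => hg (j + 1)) this
      exact ⟨j + 1, by omega, hj'⟩
    · exact ⟨0, by omega, h0⟩

/-! ### The generator matrices -/

/-- The rows of the generator matrix `[I | B]` modulo `32` of the lifted extended quadratic residue
code, packed in base `2 ^ 16` (column `0` is the lowest digit). -/
def Mn : List ℕ := [7816160720143728804550084578698882023947460314668909859969079175032070448321452669763880771947411936687714992129,
  1202481326603343507917584439735151830802589393197209490451379193970446948931438786948361010964005312407739105280,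
  16233227246911783697301563393407489234224804743300105316350264453805256954564373841827315581429364194923316772864,
  7214805383451041474112242808028604187697943911394437797826277245273063733102594016489413455725413000878491697152,
  13828292122127776055793130708051743777975313677938266729169091812418229354098476109277479337093836090930913869824,
  9018660393196130866836615163089629130396678650457082131265588044813688693486481034025340476056236038167455596544,
  1803873360953695236882604824491359699211087536755879681567438938022915564343211101087147825458484871075255549952,
  10822286051819749884068517567842171581339777471574965684226344134237923506754043922155489702469320849606303547392,
  12024758201209017723744637522292389435430270754661310325619298071502912719850269540304382072743389334609898504192,
  16834380757405991290311637435306538676769689315078325836907050287100052408583086414655285292880383158625218068480,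
  12625856665636723579834856894961650797473211482706898341450879442435343819438705897817482777259495408805932433408,
  11423595517700189638771702516937286076140482969353690120887699783923258313993824346271076387108512747033945178112]

/-- The rows of the generator matrix `[-Bᵀ | I]` modulo `4` of the dual code, packed likewise. -/
def Nn : List ℕ := [6277293298790790637954567445522197568931566126563164487681,
  411376139426085404890737522347117325631402037676706030281752578,
  26959946667150639796128583626586134376244800511559554395967089344515,
  1766847064778384329679082856551948902481579246325566956894099167282135040,
  115792089237316195423571080794043739184401821714484897849019035955357406134275,
  7588550360256754183279148073625151700398321194463273614423735846603704412479291395,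
  497323236409786642155382248146821031662398803635966271972979730444622510462467450208259,
  32592575621351777380295131014550050576823494298721883266626132197999213590028328673038368770,
  2135987035920910082395021706169552114602704522361037341761610199728076461836096547916242535710720,
  139984046386112763159840142535527767382602843577452943229688886049379219002890423364238870820337745920,
  9173994463960286046443283581208347763186259956673124590734249687241152166502490341932747078217573769216001,
  601226901190101306339707032778070279008174732520529886901162274068054540475706297499904777173113775432491204611]

/-- The entries of the generator matrix modulo `32` of the code. -/
def M (i j : ℕ) : ℕ := Mn.getD i 0 / 65536 ^ j % 32

/-- The entries of the generator matrix modulo `4` of the dual code. -/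
def N (i j : ℕ) : ℕ := Nn.getD i 0 / 65536 ^ j % 4

lemma M_sys : ∀ i < 12, ∀ j < 12, M i j = if i = j then 1 else 0 := by decide +kernel

lemma N_sys : ∀ i < 12, ∀ j < 12, N i (12 + j) = if i = j then 1 else 0 := by decide +kernel

lemma M_pk : (flt 12 (fun _ => True) M).map (pk base 24) = Mn := by
  simp only [flt, if_true, List.map_cons, List.map_nil]
  decide +kernel

lemma N_pk : (flt 12 (fun _ => True) N).map (pk base 24) = Nn := by
  simp only [flt, if_true, List.map_cons, List.map_nil]
  decide +kernel

lemma flt_smul (n m : ℕ) (R : ℕ → ℕ → ℕ) :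
    (flt n (fun _ => True) (fun k => m • R k)).map (pk base 24)
      = ((flt n (fun _ => True) R).map (pk base 24)).map (Nat.mul m) := by
  induction n generalizing R with
  | zero => rfl
  | succ n ih =>
    simp only [flt, if_true, List.map_cons, pk_smul]
    exact congrArg _ (ih (fun k => R (k + 1)))

lemma M_le (i j : ℕ) : M i j ≤ 31 := Nat.le_of_lt_succ (Nat.mod_lt _ (by norm_num))

lemma N_le (i j : ℕ) : N i j ≤ 3 := Nat.le_of_lt_succ (Nat.mod_lt _ (by norm_num))

lemma colM_le (j : ℕ) : ∑ k ∈ Finset.range 12, M k j ≤ 372 :=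
  (Finset.sum_le_card_nsmul _ _ 31 fun k _ => M_le k j).trans (by simp)

lemma colN_le (j : ℕ) : ∑ k ∈ Finset.range 12, N k j ≤ 36 :=
  (Finset.sum_le_card_nsmul _ _ 3 fun k _ => N_le k j).trans (by simp)

lemma colM_sys : ∀ j < 12, ∑ k ∈ Finset.range 12, M k j = 1 := by decide +kernel

lemma comb_M {w : Fin 12 → ℕ} (k : Fin 12) : comb w M k = w k := by
  simp only [comb]
  rw [Finset.sum_eq_single k]
  · simp [M_sys k k.2 k k.2]
  · intro i _ hi
    rw [M_sys i i.2 k k.2, if_neg (fun h => hi (Fin.ext h)), mul_zero]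
  · simp

lemma comb_N {w : Fin 12 → ℕ} (k : Fin 12) : comb w N (12 + k) = w k := by
  simp only [comb]
  rw [Finset.sum_eq_single k]
  · simp [N_sys k k.2 k k.2]
  · intro i _ hi
    rw [N_sys i i.2 k k.2, if_neg (fun h => hi (Fin.ext h)), mul_zero]
  · simp

lemma comb_smul {n : ℕ} (w : Fin n → ℕ) (m : ℕ) (R : ℕ → ℕ → ℕ) :
    comb w (fun k => m • R k) = m • comb w R := by
  ext j
  simp only [comb, Pi.smul_apply, smul_eq_mul, Finset.mul_sum]
  exact Finset.sum_congr rfl fun k _ => by ring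

/-! ### The local factors -/

/-- The polynomial ring in which the enumerators live after adjoining the fourth roots of unity. -/
abbrev Pol := MvPolynomial (Fin 6) ℂ

/-- The local factor attached to a coordinate `c` modulo `32` of a codeword and a coordinate `b`
modulo `4` of a dual word. It is the Fourier component of the substituted variable with respect to
translations of `c` by multiples of `8`. -/
def psi (c b : ℕ) : Pol :=
  if c % 8 = 0 then
    C (Complex.I ^ (c / 8 * b)) * X (if b % 4 = 0 then 5 else if b % 2 = 0 then 4 else 3)
  else if b % 4 = 0 then X (if c % 2 = 1 then 0 else if c % 4 = 2 then 1 else 2)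
  else 0

/-- The product of the local factors over the 24 coordinates. -/
def F (c b : ℕ → ℕ) : Pol := ∏ j ∈ Finset.range 24, psi (c j) (b j)

lemma F_conflict {c b : ℕ → ℕ} {j : ℕ} (hj : j < 24) (hc : c j % 8 ≠ 0) (hb : b j % 4 ≠ 0) :
    F c b = 0 :=
  Finset.prod_eq_zero (Finset.mem_range.2 hj) (by simp [psi, hc, hb])

/-! ### The key of a pair of words -/

/-- The contribution of one coordinate to the key of a pair of words: for the argument `4 * c + b`
it records the class of the coordinate in a field of five bits (the sixth field marks vanishing
local factors) and the exponent of `I` above these fields. -/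
def kp (x : ℕ) : ℕ :=
  sel (Nat.mod x 4)
    (sel (Nat.mod x 8) (sel (Nat.mod x 16) (sel (Nat.mod x 32) 0 1024) 32) 1)
    (sel (Nat.div (Nat.mod x 32) 4)
      (Nat.add (sel (Nat.mod x 2) 1048576 32768)
        (Nat.mul 1073741824 (Nat.mul (Nat.div x 32) (Nat.mod x 4))))
      33554432)

/-- The sum of `kp` over `n` packed entries. -/
def key (n : ℕ) : ℕ → ℕ :=
  Nat.rec (motive := fun _ => ℕ → ℕ) (fun _ => 0)
    (fun _ ih x => Nat.add (kp (Nat.mod x 65536)) (strict (Nat.div x 65536) ih)) n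

lemma kp_spec (c b : ℕ) (hb : b < 4) : ∃ n0 n1 n2 n3 n4 n5 n6 e : ℕ,
    kp (4 * c + b) = n0 + 32 * n1 + 1024 * n2 + 32768 * n3 + 1048576 * n4 + 33554432 * n5
      + 1073741824 * e ∧ n0 + n1 + n2 + n3 + n4 + n5 + n6 = 1 ∧
    (n5 = 0 → psi c b = C (Complex.I ^ e) * (X 0 ^ n0 * X 1 ^ n1 * X 2 ^ n2 * X 3 ^ n3
      * X 4 ^ n4 * X 5 ^ n6)) := by
  have hk : kp (4 * c + b) = if (4 * c + b) % 4 = 0 then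
      (if (4 * c + b) % 8 = 0 then
        (if (4 * c + b) % 16 = 0 then (if (4 * c + b) % 32 = 0 then 0 else 1024) else 32) else 1)
      else if (4 * c + b) % 32 / 4 = 0 then (if (4 * c + b) % 2 = 0 then 1048576 else 32768)
        + 1073741824 * ((4 * c + b) / 32 * ((4 * c + b) % 4)) else 33554432 := by
    simp only [kp, sel_eq]; rfl
  rw [hk]
  by_cases h0 : b = 0
  · subst h0
    rw [if_pos (by omega)]
    by_cases h1 : c % 2 = 1
    · refine ⟨1, 0, 0, 0, 0, 0, 0, 0, ?_, rfl, fun _ => ?_⟩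
      · rw [if_neg (by omega)]
      · simp [psi, h1, show c % 8 ≠ 0 by omega]
    by_cases h2 : c % 4 = 2
    · refine ⟨0, 1, 0, 0, 0, 0, 0, 0, ?_, rfl, fun _ => ?_⟩
      · rw [if_pos (by omega), if_neg (by omega)]
      · simp [psi, h1, h2, show c % 8 ≠ 0 by omega]
    by_cases h3 : c % 8 = 4
    · refine ⟨0, 0, 1, 0, 0, 0, 0, 0, ?_, rfl, fun _ => ?_⟩
      · rw [if_pos (by omega), if_pos (by omega), if_neg (by omega)]
      · simp [psi, h1, h2, h3]
    · refine ⟨0, 0, 0, 0, 0, 0, 1, 0, ?_, rfl, fun _ => ?_⟩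
      · rw [if_pos (by omega), if_pos (by omega), if_pos (by omega)]
      · simp [psi, show c % 8 = 0 by omega]
  · rw [if_neg (by omega)]
    by_cases h1 : c % 8 = 0
    · rw [if_pos (by omega), show (4 * c + b) / 32 = c / 8 by omega,
        show (4 * c + b) % 4 = b by omega]
      by_cases h2 : b % 2 = 0
      · refine ⟨0, 0, 0, 0, 1, 0, 0, c / 8 * b, ?_, rfl, fun _ => ?_⟩
        · rw [if_pos (by omega)]
        · simp [psi, h1, h2, show b % 4 ≠ 0 by omega]
      · refine ⟨0, 0, 0, 1, 0, 0, 0, c / 8 * b, ?_, rfl, fun _ => ?_⟩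
        · rw [if_neg (by omega)]
        · simp [psi, h1, show b % 4 ≠ 0 by omega, show b % 2 = 1 by omega]
    · refine ⟨0, 0, 0, 0, 0, 1, 0, 0, ?_, rfl, fun h => absurd h one_ne_zero⟩
      rw [if_neg (by omega)]

lemma key_spec (n : ℕ) (c b : ℕ → ℕ) (hb : ∀ j, b j < 4) (hc : ∀ j, 4 * c j + b j < base) :
    ∃ n0 n1 n2 n3 n4 n5 n6 e : ℕ,
    key n (pk base n (fun j => 4 * c j + b j)) = n0 + 32 * n1 + 1024 * n2 + 32768 * n3
      + 1048576 * n4 + 33554432 * n5 + 1073741824 * e ∧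
    n0 + n1 + n2 + n3 + n4 + n5 + n6 = n ∧
    (n5 = 0 → ∏ j ∈ Finset.range n, psi (c j) (b j) = C (Complex.I ^ e) *
      (X 0 ^ n0 * X 1 ^ n1 * X 2 ^ n2 * X 3 ^ n3 * X 4 ^ n4 * X 5 ^ n6)) := by
  induction n generalizing c b with
  | zero => exact ⟨0, 0, 0, 0, 0, 0, 0, 0, rfl, rfl, by simp⟩
  | succ n ih =>
    obtain ⟨m0, m1, m2, m3, m4, m5, m6, e, h1, h2, h3⟩ := ih (fun j => c (j + 1))
      (fun j => b (j + 1)) (fun j => hb _) (fun j => hc _)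
    obtain ⟨m0', m1', m2', m3', m4', m5', m6', e', h1', h2', h3'⟩ := kp_spec (c 0) (b 0) (hb 0)
    refine ⟨m0 + m0', m1 + m1', m2 + m2', m3 + m3', m4 + m4', m5 + m5', m6 + m6', e + e',
      ?_, by omega, fun h5 => ?_⟩
    · have : ∀ x, key (n + 1) x = kp (x % 65536) + strict (x / 65536) (key n) := fun x => rfl
      rw [this, strict_eq, pk_mod (f := fun j => 4 * c j + b j) (hc 0),
        pk_div (f := fun j => 4 * c j + b j) (hc 0), h1, h1']
      ring
    · rw [Finset.prod_range_succ', h3 (by omega), h3' (by omega), pow_add, C_mul]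
      ring

/-! ### Histograms -/

/-- The keys, without the exponent of `I`, that occur for octads. -/
def typs : List ℕ :=
  [2359432, 2360456, 2361480, 4456584, 4458568, 2360392, 2361416, 2363464]

/-- The exponents of `X 1`, `X 2`, `X 4` and `X 5` that belong to the keys in `typs`. -/
def texp : List (ℕ × ℕ × ℕ × ℕ) :=
  [(4, 0, 2, 2), (4, 1, 2, 1), (4, 2, 2, 0), (4, 0, 4, 0), (2, 2, 4, 0), (2, 1, 2, 3), (2, 2, 2, 2),
    (2, 4, 2, 0)]

/-- The monomial with the exponents in place `t` of `texp`. -/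
def tmon (t : ℕ) : Pol :=
  X 0 ^ 8 * X 1 ^ (texp.getD t 0).1 * X 2 ^ (texp.getD t 0).2.1 * X 3 ^ 8
    * X 4 ^ (texp.getD t 0).2.2.1 * X 5 ^ (texp.getD t 0).2.2.2

/-- The value of a summand in class `t`; a class consists of a key and an exponent of `I`. -/
def bin (t : ℕ) : Pol := C (Complex.I ^ (t % 4)) * tmon (t / 4)

/-- The position of the first occurrence of `t` in `l`, or the length of `l`. -/
def find (t : ℕ) (l : List ℕ) : ℕ :=
  List.rec 0 (fun x _ ih => Bool.rec (Nat.succ ih) 0 (Nat.beq x t)) l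

lemma find_cons (t x : ℕ) (l : List ℕ) :
    find t (x :: l) = if x = t then 0 else find t l + 1 := by
  have : find t (x :: l) = Bool.rec (Nat.succ (find t l)) 0 (Nat.beq x t) := rfl
  rw [this]
  by_cases h : x = t
  · rw [if_pos h, h, Nat.beq_refl]
  · rw [if_neg h, show Nat.beq x t = false from
      Bool.eq_false_iff.2 fun h' => h (Nat.eq_of_beq_eq_true h')]

/-- The histogram, packed in base `2 ^ 64`, of a single summand with key `k`. -/
def hist (k : ℕ) : ℕ :=
  Nat.pow 18446744073709551616
    (Nat.add (Nat.mul 4 (find (Nat.mod k 1073741824) typs)) (Nat.mod (Nat.div k 1073741824) 4))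

/-- `Rel k n p` says that `n` is the packed histogram of `2 ^ k` or fewer summands in each class
which add up to `p`. The classes from `32` on collect the keys that are not in `typs`. -/
def Rel (k n : ℕ) (p : Pol) : Prop :=
  ∃ h : ℕ → ℕ, n = pk (2 ^ 64) 36 h ∧ (∀ t, h t ≤ 2 ^ k) ∧
    ((∀ t, 32 ≤ t → t < 36 → h t = 0) → p = ∑ t ∈ Finset.range 32, h t • bin t)

lemma Rel_add (k x : ℕ) (y : Pol) (x' : ℕ) (y' : Pol) (h : Rel k x y) (h' : Rel k x' y') :
    Rel (k + 1) (x + x') (y + y') := by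
  obtain ⟨f, h1, h2, h3⟩ := h
  obtain ⟨f', h1', h2', h3'⟩ := h'
  refine ⟨f + f', by rw [pk_add, h1, h1'], fun t => ?_, fun h0 => ?_⟩
  · have := h2 t
    have := h2' t
    rw [pow_succ, Pi.add_apply]
    omega
  · rw [h3 fun t ht ht' => ?_, h3' fun t ht ht' => ?_, ← Finset.sum_add_distrib]
    · exact Finset.sum_congr rfl fun t _ => by rw [Pi.add_apply, add_smul]
    · have := h0 t ht ht'
      simp only [Pi.add_apply] at this
      omega
    · have := h0 t ht ht'
      simp only [Pi.add_apply] at this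
      omega

lemma Rel_mono {k k' n : ℕ} {p : Pol} (hk : k ≤ k') (h : Rel k n p) : Rel k' n p := by
  obtain ⟨f, h1, h2, h3⟩ := h
  exact ⟨f, h1, fun t => (h2 t).trans (Nat.pow_le_pow_right (by norm_num) hk), h3⟩

lemma Rel_zero (k : ℕ) : Rel k 0 0 :=
  ⟨0, by rw [pk_eq_sum]; simp, by simp, by simp⟩

lemma Rel_single {t : ℕ} (ht : t < 36) {p : Pol} (hp : t < 32 → p = bin t) :
    Rel 0 ((2 ^ 64) ^ t) p := by
  refine ⟨fun s => if s = t then 1 else 0, ?_, fun s => by dsimp only; split_ifs <;> simp,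
    fun h => ?_⟩
  · rw [pk_eq_sum, Finset.sum_eq_single t]
    · simp
    · intro s _ hs; simp [hs]
    · simp [ht]
  · have ht' : t < 32 := by
      by_contra hcon
      have := h t (by omega) ht
      simp at this
    rw [Finset.sum_eq_single t, hp ht']
    · simp
    · intro s _ hs; simp [hs]
    · simp [ht']

lemma Rel_leaf (c b b' : ℕ → ℕ) (hb' : ∀ j, b' j = b j % 4) (hc : ∀ j, 4 * c j + b' j < base) :
    Rel 0 (hist (key 24 (pk base 24 (fun j => 4 * c j + b' j)))) (F c b) := by
  have hF : F c b = ∏ j ∈ Finset.range 24, psi (c j) (b' j) := by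
    refine Finset.prod_congr rfl fun j _ => ?_
    have h4 : ∀ e, Complex.I ^ (e * (b j % 4)) = Complex.I ^ (e * b j) := fun e => by
      rw [mul_comm e, mul_comm e, pow_mul, pow_mul, ← Complex.I_pow_eq_pow_mod]
    simp only [psi, hb', Nat.mod_mod, h4, Nat.mod_mod_of_dvd (b j) (show 2 ∣ 4 by norm_num)]
  obtain ⟨n0, n1, n2, n3, n4, n5, n6, e, h1, h2, h3⟩ := key_spec 24 c b'
    (fun j => by rw [hb']; exact Nat.mod_lt _ (by norm_num)) hc
  rw [← hF] at h3
  generalize key 24 (pk base 24 (fun j => 4 * c j + b' j)) = k at h1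
  have hph : k / 1073741824 = e := by omega
  have hhist : hist k = (2 ^ 64) ^ (4 * find (k % 1073741824) typs + e % 4) := by
    rw [← hph]; norm_num [hist]; rfl
  rw [hhist]
  have hI : Complex.I ^ e = Complex.I ^ (e % 4) := Complex.I_pow_eq_pow_mod e
  have he : e % 4 < 4 := Nat.mod_lt _ (by norm_num)
  have main : ∀ t, find (k % 1073741824) typs = t → t ≤ 8 ∧
      (t < 8 → F c b = C (Complex.I ^ e) * tmon t) := by
    rintro t rfl
    simp only [typs, find_cons]
    have fin : ∀ x : ℕ, x = k % 1073741824 → ∀ a0 a1 a2 a3 a4 a6 : ℕ,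
        x = a0 + 32 * a1 + 1024 * a2 + 32768 * a3 + 1048576 * a4 →
        a0 + a1 + a2 + a3 + a4 + a6 = 24 →
        F c b = C (Complex.I ^ e) * (X 0 ^ a0 * X 1 ^ a1 * X 2 ^ a2 * X 3 ^ a3
          * X 4 ^ a4 * X 5 ^ a6) := by
      intro x hx a0 a1 a2 a3 a4 a6 hxa hsum
      have e5 : n5 = 0 := by omega
      have e0 : n0 = a0 := by omega
      have e1 : n1 = a1 := by omega
      have e2 : n2 = a2 := by omega
      have e3 : n3 = a3 := by omega
      have e4 : n4 = a4 := by omega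
      have e6 : n6 = a6 := by omega
      rw [h3 e5, e0, e1, e2, e3, e4, e6]
    split_ifs with q q q q q q q q
    · exact ⟨by norm_num, fun _ => fin _ q 8 4 0 8 2 2 rfl rfl⟩
    · exact ⟨by norm_num, fun _ => fin _ q 8 4 1 8 2 1 rfl rfl⟩
    · exact ⟨by norm_num, fun _ => fin _ q 8 4 2 8 2 0 rfl rfl⟩
    · exact ⟨by norm_num, fun _ => fin _ q 8 4 0 8 4 0 rfl rfl⟩
    · exact ⟨by norm_num, fun _ => fin _ q 8 2 2 8 4 0 rfl rfl⟩
    · exact ⟨by norm_num, fun _ => fin _ q 8 2 1 8 2 3 rfl rfl⟩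
    · exact ⟨by norm_num, fun _ => fin _ q 8 2 2 8 2 2 rfl rfl⟩
    · exact ⟨by norm_num, fun _ => fin _ q 8 2 4 8 2 0 rfl rfl⟩
    · exact ⟨by simp [find], fun h => absurd h (by simp [find])⟩
  obtain ⟨m1, m2⟩ := main _ rfl
  refine Rel_single (by omega) fun ht => ?_
  have q1 : (4 * find (k % 1073741824) typs + e % 4) % 4 = e % 4 := by omega
  have q2 : (4 * find (k % 1073741824) typs + e % 4) / 4 = find (k % 1073741824) typs := by omega
  rw [bin, q1, q2, m2 (by omega), hI]

/-! ### The search over pairs of words -/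

/-- The sum of `F` over the words `x + 4 f M`, where `f` runs through the bit vectors. -/
def sum4 (x b : ℕ → ℕ) : Pol :=
  ∑ f : Fin 12 → Bool, F (x + comb (fun k => bv (f k)) (fun k => 4 • M k)) b

/-- The sum of `F` over the words `x + 2 e M + 4 f M`. -/
def sum2 (x b : ℕ → ℕ) : Pol :=
  ∑ e : Fin 12 → Bool, sum4 (x + comb (fun k => bv (e k)) (fun k => 2 • M k)) b

/-- The sum of `sum2` over the dual words `b + 2 w N`. -/
def sumN (x b : ℕ → ℕ) : Pol :=
  ∑ w : Fin 12 → Bool, sum2 x (b + comb (fun k => bv (w k)) (fun k => 2 • N k))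

/-- The sum of `F` over all codewords modulo `8` with an odd coordinate and all dual words
`b + 2 w N`. -/
def Q (b : ℕ → ℕ) : Pol :=
  ∑ u : Fin 12 → Bool, if ∃ j < 24, (0 + comb (fun k => bv (u k)) M) j % 2 = 1 then
    sumN (0 + comb (fun k => bv (u k)) M) b else 0

/-- The packed rows of `2 M`. -/
def M2 : List ℕ := Mn.map (Nat.mul 2)

/-- The packed rows of `4 M`. -/
def M4 : List ℕ := Mn.map (Nat.mul 4)

/-- The packed rows of `2 N`. -/
def N2 : List ℕ := Nn.map (Nat.mul 2)

/-- The packed histogram of the summands of `Q`; branches on which some local factor vanishes are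
cut as soon as this is visible. -/
def search (b0 : ℕ) : ℕ :=
  sbs (fun u => strict (fmp (fun x => Nat.mod x 2) 24 u) fun um =>
    sel um 0 (sel (Nat.land b0 um) (strict (Nat.mul 3 um) fun um3 =>
      sbs (fun b => sel (Nat.land b um3)
        (strict (fmp (fun x => sel (Nat.mod x 4) 0 1) 24 b) fun bm =>
          strict (fmp (fun x => Nat.mod x 4) 24 b) fun b4 =>
          strict (Nat.mul 3 bm) fun bm3 => strict (Nat.mul 7 bm) fun bm7 =>
          sbs (fun e => sel (Nat.land e bm3)
            (sbs (fun c => sel (Nat.land c bm7)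
                (strict (key 24 (Nat.add (Nat.mul 4 c) b4)) hist) 0)
              (filt 4 M4 b) e) 0)
          (filt 4 M2 b) u) 0)
      (filt 2 N2
        (Nat.div u 6277101735386680763835789423207666416102355444464034512896)) b0) 0))
  (filt 2 Mn b0) 0

lemma M2_pk : (flt 12 (fun _ => True) (fun k => 2 • M k)).map (pk base 24) = M2 := by
  rw [flt_smul, M_pk]; rfl

lemma M4_pk : (flt 12 (fun _ => True) (fun k => 4 • M k)).map (pk base 24) = M4 := by
  rw [flt_smul, M_pk]; rfl

lemma N2_pk : (flt 12 (fun _ => True) (fun k => 2 • N k)).map (pk base 24) = N2 := by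
  rw [flt_smul, N_pk]; rfl

/-- One level of the search. -/
lemma level (k : ℕ) (f : ℕ → ℕ) (g : (ℕ → ℕ) → Pol) (K : ℕ → Prop) (R : ℕ → ℕ → ℕ) (a : ℕ → ℕ)
    (L : List ℕ) (hL : L = (flt 12 K R).map (pk base 24))
    (hK : ∀ w : Fin 12 → Bool, ∀ k : Fin 12, ¬ K k → w k = true →
      g (a + comb (fun k => bv (w k)) R) = 0)
    (h : ∀ x : ℕ → ℕ, (∀ j, a j ≤ x j) → (∀ j, x j ≤ a j + ∑ k ∈ Finset.range 12, R k j) →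
      Rel k (f (pk base 24 x)) (g x)) :
    Rel (k + 12) (sbs f L (pk base 24 a)) (∑ w : Fin 12 → Bool,
      g (a + comb (fun k => bv (w k)) R)) := by
  rw [sum_eq_bsum 12 g K R a hK, sbs_eq, hL]
  refine Rel_mono (Nat.add_le_add_left (flt_length 12 K R) k)
    (bsum_rel Rel Rel_add f g _ a k fun x h0 h1 => h x h0 fun j => (h1 j).trans ?_)
  exact Nat.add_le_add_left (flt_sum_le 12 K R j) _

lemma land_mask {t : ℕ} (ht : t ≤ 16) {x y : ℕ → ℕ} (hx : ∀ j, x j < base) (hy : ∀ j, y j ≤ 1)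
    (h : Nat.land (pk base 24 x) ((2 ^ t - 1) * pk base 24 y) ≠ 0) :
    ∃ j < 24, y j ≠ 0 ∧ x j % 2 ^ t ≠ 0 := by
  rw [← pk_smul] at h
  have hp : 2 ^ t ≤ 2 ^ 16 := Nat.pow_le_pow_right (by norm_num) ht
  have hp' : 0 < 2 ^ t := by positivity
  obtain ⟨j, hj, hj'⟩ := land_pk hx (fun j => by
    have := hy j
    have : (2 ^ t - 1) * y j ≤ (2 ^ t - 1) * 1 := Nat.mul_le_mul_left _ this
    simp only [Pi.smul_apply, smul_eq_mul, base]
    norm_num at hp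
    omega) h
  refine ⟨j, hj, ?_⟩
  simp only [Pi.smul_apply, smul_eq_mul] at hj'
  have hy0 : y j ≠ 0 := fun h0 => by simp [h0] at hj'
  have : y j = 1 := le_antisymm (hy j) (Nat.one_le_iff_ne_zero.2 hy0)
  rw [this, mul_one, Nat.and_two_pow_sub_one_eq_mod] at hj'
  exact ⟨hy0, hj'⟩

lemma sum4_conflict {x b : ℕ → ℕ} {j : ℕ} (hj : j < 24) (hx : x j % 4 ≠ 0) (hb : b j % 4 ≠ 0) :
    sum4 x b = 0 := by
  refine Finset.sum_eq_zero fun f _ => F_conflict hj ?_ hb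
  rw [comb_smul]
  simp only [Pi.add_apply, Pi.smul_apply, smul_eq_mul]
  omega

lemma sum2_conflict {x b : ℕ → ℕ} {j : ℕ} (hj : j < 24) (hx : x j % 2 ≠ 0) (hb : b j % 4 ≠ 0) :
    sum2 x b = 0 := by
  refine Finset.sum_eq_zero fun f _ => sum4_conflict hj ?_ hb
  rw [comb_smul]
  simp only [Pi.add_apply, Pi.smul_apply, smul_eq_mul]
  omega

lemma sumN_conflict {x b : ℕ → ℕ} {j : ℕ} (hj : j < 24) (hx : x j % 2 ≠ 0) (hb : b j % 2 ≠ 0) :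
    sumN x b = 0 := by
  refine Finset.sum_eq_zero fun f _ => sum2_conflict hj hx ?_
  rw [comb_smul]
  simp only [Pi.add_apply, Pi.smul_apply, smul_eq_mul]
  omega

lemma col_smul (m : ℕ) (R : ℕ → ℕ → ℕ) (j : ℕ) :
    ∑ k ∈ Finset.range 12, (m • R k) j = m * ∑ k ∈ Finset.range 12, R k j := by
  simp only [Pi.smul_apply, smul_eq_mul, Finset.mul_sum]

/-- The histogram found by the search is that of `Q`. The hypotheses on `b` hold for the sum of a
set of rows of `N`. -/
lemma search_spec (b : ℕ → ℕ) (hb : ∀ j, b j ≤ 36) (hb1 : ∀ k < 12, b (12 + k) ≤ 1) :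
    Rel 48 (search (pk base 24 b)) (Q b) := by
  have hB : (6277101735386680763835789423207666416102355444464034512896 : ℕ) = base ^ 12 := by
    norm_num
  have h0 : pk base 24 0 = 0 := by rw [pk_eq_sum]; simp
  have hs : search (pk base 24 b) = sbs _ (filt 2 Mn (pk base 24 b)) (pk base 24 0) :=
    congrArg (sbs _ _) h0.symm
  rw [hs, Q]
  simp only [strict_eq, sel_eq]
  refine level 36 _ (fun u => if ∃ j < 24, u j % 2 = 1 then sumN u b else 0)
    (fun k => b k % 2 = 0) M 0 _ ?_ ?_ ?_
  · rw [← M_pk]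
    exact filt_eq 2 24 12 (by norm_num) (by norm_num) M b fun j => (hb j).trans_lt (by norm_num)
  · intro w k hk hw
    rw [sumN_conflict (j := k) (by omega) _ hk, ite_self]
    rw [zero_add, comb_M, hw]
    simp [bv]
  intro u _ hu
  simp only [Pi.zero_apply, zero_add] at hu
  have hu1 : ∀ j, u j ≤ 372 := fun j => (hu j).trans (colM_le j)
  have hu2 : ∀ j < 12, u j ≤ 1 := fun j hj => (hu j).trans (colM_sys j hj).le
  have hub : ∀ j, u j < base := fun j => (hu1 j).trans_lt (by norm_num)
  have hum : fmp (fun x => Nat.mod x 2) 24 (pk base 24 u) = pk base 24 (fun j => u j % 2) :=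
    fmp_eq _ 24 u hub
  rw [hum]
  by_cases c1 : (pk base 24 fun j => u j % 2) = 0
  · rw [if_pos c1, if_neg]
    · exact Rel_zero _
    rintro ⟨j, hj, hj'⟩
    have := pk_digit (B := base) (n := 24) (f := fun j => u j % 2)
      (fun j => (Nat.mod_lt _ (by norm_num)).trans (by norm_num)) hj
    rw [c1] at this
    simp at this
    omega
  have c2 : ∃ j < 24, u j % 2 = 1 := by
    by_contra hcon
    push Not at hcon
    refine c1 ((pk_congr fun j hj => ?_).trans h0)
    have := hcon j hj
    simp only [Pi.zero_apply]
    omega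
  rw [if_neg c1, if_pos c2]
  by_cases c3 : Nat.land (pk base 24 b) (pk base 24 fun j => u j % 2) = 0
  swap
  · rw [if_neg c3]
    obtain ⟨j, hj, h1, h2⟩ := land_mask (t := 1) (x := b) (y := fun j => u j % 2) (by norm_num)
      (fun j => (hb j).trans_lt (by norm_num))
      (fun j => Nat.le_of_lt_succ (Nat.mod_lt _ (by norm_num))) (by simpa using c3)
    rw [sumN_conflict hj h1 h2]
    exact Rel_zero _
  · rw [if_pos c3]
    -- the level of the dual words
    refine level 24 _ (fun y => sum2 u y) (fun k => u (12 + k) % 2 = 0) (fun k => 2 • N k) b _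
      ?_ ?_ ?_
    · rw [← N2_pk, hB]
      have : Nat.div (pk base 24 u) (base ^ 12) = pk base 12 (fun j => u (12 + j)) :=
        pk_div_pow 12 12 hub
      rw [this]
      exact filt_eq 2 12 12 (by norm_num) (by norm_num) _ _ fun j => hub _
    · intro w k hk hw
      refine sum2_conflict (j := 12 + k) (by omega) hk ?_
      have := hb1 k k.2
      rw [comb_smul]
      simp only [Pi.add_apply, Pi.smul_apply, smul_eq_mul, comb_N, hw, bv, cond_true]
      omega
    intro y _ hy
    simp only [col_smul] at hy
    have hy1 : ∀ j, y j ≤ 108 := fun j => by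
      have := hy j
      have := hb j
      have := colN_le j
      omega
    have hyb : ∀ j, y j < base := fun j => (hy1 j).trans_lt (by norm_num)
    have hbm : fmp (fun x => if Nat.mod x 4 = 0 then 0 else 1) 24 (pk base 24 y)
        = pk base 24 (fun j => if y j % 4 = 0 then 0 else 1) := fmp_eq _ 24 y hyb
    have hb4 : fmp (fun x => Nat.mod x 4) 24 (pk base 24 y) = pk base 24 (fun j => y j % 4) :=
      fmp_eq _ 24 y hyb
    rw [hbm, hb4]
    split_ifs with c5
    swap
    · obtain ⟨j, hj, h1, h2⟩ := land_mask (t := 2) (by norm_num) hyb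
        (fun j => Nat.le_of_lt_succ (Nat.mod_lt _ (by norm_num))) c5
      rw [sum2_conflict hj h1 h2]
      exact Rel_zero _
    have hind : ∀ j, (if y j % 4 = 0 then 0 else 1) ≤ 1 := fun j => by split_ifs <;> norm_num
    -- the level of the codewords modulo 4
    refine level 12 _ (fun x => sum4 x y) (fun k => y k % 4 = 0) (fun k => 2 • M k) u _ ?_ ?_ ?_
    · rw [← M2_pk]
      exact filt_eq 4 24 12 (by norm_num) (by norm_num) _ _ hyb
    · intro w k hk hw
      refine sum4_conflict (j := k) (by omega) ?_ hk
      have := hu2 k k.2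
      rw [comb_smul]
      simp only [Pi.add_apply, Pi.smul_apply, smul_eq_mul, comb_M, hw, bv, cond_true]
      omega
    intro x _ hx
    simp only [col_smul] at hx
    have hx1 : ∀ j, x j ≤ 1116 := fun j => by
      have := hx j
      have := hu1 j
      have := colM_le j
      omega
    have hx2 : ∀ j < 12, x j ≤ 3 := fun j hj => by
      have := hx j
      have := hu2 j hj
      have := colM_sys j hj
      omega
    have hxb : ∀ j, x j < base := fun j => (hx1 j).trans_lt (by norm_num)
    split_ifs with c6
    swap
    · obtain ⟨j, hj, h1, h2⟩ := land_mask (t := 2) (by norm_num) hxb hind c6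
      rw [sum4_conflict hj h2 (by intro h; simp [h] at h1)]
      exact Rel_zero _
    -- the level of the codewords modulo 8
    refine level 0 _ (fun c => F c y) (fun k => y k % 4 = 0) (fun k => 4 • M k) x _ ?_ ?_ ?_
    · rw [← M4_pk]
      exact filt_eq 4 24 12 (by norm_num) (by norm_num) _ _ hyb
    · intro w k hk hw
      refine F_conflict (j := k) (by omega) ?_ hk
      have := hx2 k k.2
      rw [comb_smul]
      simp only [Pi.add_apply, Pi.smul_apply, smul_eq_mul, comb_M, hw, bv, cond_true]
      omega
    intro c _ hc
    simp only [col_smul] at hc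
    have hc1 : ∀ j, c j ≤ 2604 := fun j => by
      have := hc j
      have := hx1 j
      have := colM_le j
      omega
    have hcb : ∀ j, c j < base := fun j => (hc1 j).trans_lt (by norm_num)
    split_ifs with c7
    swap
    · obtain ⟨j, hj, h1, h2⟩ := land_mask (t := 3) (by norm_num) hcb hind c7
      rw [F_conflict hj h2 (by intro h; simp [h] at h1)]
      exact Rel_zero _
    have hcy : Nat.add (Nat.mul 4 (pk base 24 c)) (pk base 24 fun j => y j % 4)
        = pk base 24 (fun j => 4 * c j + y j % 4) := by
      change 4 * (pk base 24 c) + (pk base 24 fun j => y j % 4) = _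
      rw [← pk_smul, ← pk_add]; rfl
    rw [hcy]
    refine Rel_leaf c y (fun j => y j % 4) (fun j => rfl) fun j => ?_
    have := hc1 j
    have := Nat.mod_lt (y j) (show 0 < 4 by norm_num)
    simp only [base]
    omega

/-! ### The search for representatives of the orbits -/

/-- The word of the dual code with coefficients the binary digits of `m`. -/
def bvec (m : ℕ) : ℕ → ℕ := comb (fun k : Fin 12 => m / 2 ^ (k : ℕ) % 2) N

/-- The packed form of `bvec`. -/
def brow (m : ℕ) : ℕ :=
  List.rec (motive := fun _ => ℕ → ℕ) (fun _ => 0)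
    (fun r _ ih x => Nat.add (Nat.mul (Nat.mod x 2) r) (strict (Nat.div x 2) ih)) Nn m

/-- The numbers of pairs of words in the various classes for an octad. -/
def octHist : List ℕ :=
  [64, 64, 192, 64, 384, 128, 128, 128, 64, 64, 192, 64, 128, 0, 0, 0, 64, 64, 192, 64,
    128, 256, 128, 256, 64, 128, 64, 128, 64, 128, 64, 128, 0, 0, 0, 0]

/-- The octads that represent the orbits. -/
def octReps : List ℕ := [4, 2048, 32]

/-- Representatives of the orbits of the other nonzero words. -/
def otherReps : List ℕ :=
  [83, 2369, 40, 2116, 2196, 784, 772, 513, 2096, 2176, 140, 2306, 2912, 2123, 453, 4095]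

lemma pk_bvec (m : ℕ) : pk base 24 (bvec m) = brow m := by
  have gen : ∀ n m, ∀ R : ℕ → ℕ → ℕ,
      pk base 24 (comb (fun k : Fin n => m / 2 ^ (k : ℕ) % 2) R)
        = List.rec (motive := fun _ => ℕ → ℕ) (fun _ => 0)
          (fun r _ ih x => Nat.add (Nat.mul (Nat.mod x 2) r) (strict (Nat.div x 2) ih))
          ((flt n (fun _ => True) R).map (pk base 24)) m := by
    intro n
    induction n with
    | zero =>
      intro m R
      rw [pk_eq_sum]
      simp [comb, flt]
    | succ n ih =>
      intro m R
      have e : comb (fun k : Fin (n + 1) => m / 2 ^ (k : ℕ) % 2) R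
          = (m % 2) • R 0 + comb (fun k : Fin n => m / 2 / 2 ^ (k : ℕ) % 2) (fun k => R (k + 1)) := by
        ext j
        simp only [comb, Fin.sum_univ_succ, Pi.add_apply, Pi.smul_apply, smul_eq_mul]
        simp [pow_succ', Nat.div_div_eq_div_mul]
      rw [e, pk_add, pk_smul, ih]
      simp only [flt, if_true, List.map_cons, strict_eq]
      rfl
  have := gen 12 m N
  rw [N_pk] at this
  exact this

lemma bvec_le (m j : ℕ) : bvec m j ≤ 36 := by
  have h := Finset.sum_le_card_nsmul Finset.univ
    (fun k : Fin 12 => m / 2 ^ (k : ℕ) % 2 * N k j) 3 fun k _ => ?_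
  · simpa [bvec, comb] using h
  have := N_le k j
  have : m / 2 ^ (k : ℕ) % 2 ≤ 1 := Nat.le_of_lt_succ (Nat.mod_lt _ (by norm_num))
  nlinarith

lemma bvec_upper (m : ℕ) (k : ℕ) (hk : k < 12) : bvec m (12 + k) = m / 2 ^ k % 2 :=
  comb_N (w := fun k : Fin 12 => m / 2 ^ (k : ℕ) % 2) ⟨k, hk⟩

lemma Q_rel (m : ℕ) : Rel 48 (strict (brow m) search) (Q (bvec m)) := by
  rw [strict_eq, ← pk_bvec]
  refine search_spec _ (bvec_le m) fun k hk => ?_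
  rw [bvec_upper m k hk]
  exact Nat.le_of_lt_succ (Nat.mod_lt _ (by norm_num))

lemma Rel_decode {g : ℕ → ℕ} (hg : ∀ t, g t < 2 ^ 64) (hg' : ∀ t, 32 ≤ t → g t = 0) {p : Pol}
    (h : Rel 48 (pk (2 ^ 64) 36 g) p) : p = ∑ t ∈ Finset.range 32, g t • bin t := by
  obtain ⟨f, h1, h2, h3⟩ := h
  have hf : ∀ t, f t < 2 ^ 64 := fun t => (h2 t).trans_lt (by norm_num)
  have e : ∀ t < 36, f t = g t := fun t ht => by
    rw [← pk_digit hf ht, ← h1, pk_digit hg ht]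
  rw [h3 fun t h32 h36 => by rw [e t h36, hg' t h32]]
  exact Finset.sum_congr rfl fun t ht => by rw [e t (by have := Finset.mem_range.1 ht; omega)]

/-- The contribution of one octad. -/
def octPol : Pol :=
  128 * X 0 ^ 8 * X 3 ^ 8 *
    (-(X 1 ^ 4 * X 4 ^ 2 * X 5 ^ 2) + 2 * X 1 ^ 4 * X 2 * X 4 ^ 2 * X 5
      - X 1 ^ 4 * X 2 ^ 2 * X 4 ^ 2 + X 1 ^ 4 * X 4 ^ 4 - X 1 ^ 2 * X 2 ^ 2 * X 4 ^ 4)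

set_option maxHeartbeats 1000000 in
lemma sum_octHist : ∑ t ∈ Finset.range 32, octHist.getD t 0 • bin t = octPol := by
  have h2 : (C Complex.I : Pol) ^ 2 = -1 := by
    rw [← C_pow, Complex.I_sq, C_neg, C_1]
  have h3 : (C Complex.I : Pol) ^ 3 = -C Complex.I := by
    rw [pow_succ, h2]; ring
  simp only [Finset.sum_range_succ, Finset.sum_range_zero, bin, tmon, octHist, texp, octPol,
    List.getD_cons_zero, List.getD_cons_succ, Nat.reduceMod, Nat.reduceDiv, C_pow, h2, h3,
    nsmul_eq_mul, pow_zero, pow_one]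
  push_cast
  ring

set_option maxRecDepth 100000 in
lemma search_other : ∀ m ∈ otherReps, Nat.beq (strict (brow m) search) 0 = true := by
  decide +kernel

set_option maxRecDepth 100000 in
lemma search_oct0 : Nat.beq (strict (brow 4) search) (pk (2 ^ 64) 36 fun t => octHist.getD t 0)
    = true := by decide +kernel

set_option maxRecDepth 100000 in
lemma search_oct1 : Nat.beq (strict (brow 2048) search)
    (pk (2 ^ 64) 36 fun t => octHist.getD t 0) = true := by decide +kernel

set_option maxRecDepth 100000 in
lemma search_oct2 : Nat.beq (strict (brow 32) search) (pk (2 ^ 64) 36 fun t => octHist.getD t 0)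
    = true := by decide +kernel

lemma Q_other {m : ℕ} (hm : m ∈ otherReps) : Q (bvec m) = 0 := by
  have h := Q_rel m
  rw [Nat.eq_of_beq_eq_true (search_other m hm)] at h
  have h0 : pk (2 ^ 64) 36 (fun _ => 0) = 0 := by rw [pk_eq_sum]; simp
  rw [← h0] at h
  simpa using Rel_decode (g := fun _ => 0) (by simp) (by simp) h

lemma Q_oct {m : ℕ} (hm : m ∈ octReps) : Q (bvec m) = octPol := by
  have h := Q_rel m
  have e : strict (brow m) search = pk (2 ^ 64) 36 fun t => octHist.getD t 0 := by
    simp only [octReps, List.mem_cons, List.not_mem_nil, or_false] at hm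
    rcases hm with rfl | rfl | rfl
    · exact Nat.eq_of_beq_eq_true search_oct0
    · exact Nat.eq_of_beq_eq_true search_oct1
    · exact Nat.eq_of_beq_eq_true search_oct2
  rw [e] at h
  rw [← sum_octHist]
  refine Rel_decode (fun t => ?_) (fun t ht => ?_) h
  · by_cases ht : t < 36
    · have : ∀ t < 36, octHist.getD t 0 < 2 ^ 64 := by decide +kernel
      exact this t ht
    · rw [List.getD_eq_default _ _ (by simp [octHist]; omega)]; norm_num
  · by_cases ht' : t < 36
    · have : ∀ t < 36, 32 ≤ t → octHist.getD t 0 = 0 := by decide +kernel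
      exact this t ht' ht
    · exact List.getD_eq_default _ _ (by simp [octHist]; omega)

/-! ### The Fourier components of the enumerator -/

lemma I_pow_congr {a b : ℕ} (h : a % 4 = b % 4) : Complex.I ^ a = Complex.I ^ b := by
  rw [Complex.I_pow_eq_pow_mod a, Complex.I_pow_eq_pow_mod b, h]

lemma psi_mod (c b : ℕ) : psi (c % 32) (b % 4) = psi c b := by
  have h : Complex.I ^ (c % 32 / 8 * (b % 4)) = Complex.I ^ (c / 8 * b) := by
    apply I_pow_congr
    rw [Nat.mul_mod, Nat.mul_mod (c / 8), Nat.mod_mod]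
    congr 2
    omega
  simp only [psi, h, Nat.mod_mod, Nat.mod_mod_of_dvd c (show 8 ∣ 32 by norm_num),
    Nat.mod_mod_of_dvd c (show 2 ∣ 32 by norm_num), Nat.mod_mod_of_dvd c (show 4 ∣ 32 by norm_num),
    Nat.mod_mod_of_dvd b (show 2 ∣ 4 by norm_num)]

lemma psi_shift (c s b : ℕ) : psi (c + 8 * s) b = C (Complex.I ^ (s * b)) * psi c b := by
  have h1 : (c + 8 * s) % 8 = c % 8 := by omega
  have h2 : (c + 8 * s) % 2 = c % 2 := by omega
  have h3 : (c + 8 * s) % 4 = c % 4 := by omega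
  have h4 : (c + 8 * s) / 8 = c / 8 + s := by omega
  simp only [psi, h1, h2, h3, h4]
  by_cases q1 : c % 8 = 0
  · simp only [q1, if_true, add_mul, pow_add, C_mul]
    ring
  by_cases q2 : b % 4 = 0
  · have : Complex.I ^ (s * b) = 1 := by
      rw [I_pow_congr (b := 0) (by simp [Nat.mul_mod, q2]), pow_zero]
    rw [this, C_1, one_mul, if_neg q1, if_neg q1]
  · simp only [q1, q2, if_false, mul_zero]

/-- The word of the code with coefficients `q`. -/
def word (q : Fin 12 → ZMod 32) : Fin 24 → ZMod 32 := fun j => ∑ i, q i * (M i j : ZMod 32)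

/-- The product of the local factors of a pair of words. -/
def Psi (c : Fin 24 → ZMod 32) (b : Fin 24 → ZMod 4) : Pol := ∏ j, psi (c j).val (b j).val

/-- The word has an odd coordinate. -/
def HasOdd {n : ℕ} (c : Fin 24 → ZMod n) : Prop := ∃ j, (c j).val % 2 = 1

/-- The Fourier component at `b` of the enumerator of the codewords with an odd coordinate. -/
def Four (b : Fin 24 → ZMod 4) : Pol :=
  ∑ q : Fin 12 → ZMod 32, if HasOdd (word q) then Psi (word q) b else 0

/-- The summand of `Four` in terms of natural numbers. -/
def term (x b : ℕ → ℕ) : Pol := if ∃ j < 24, x j % 2 = 1 then F x b else 0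

lemma Psi_cast (c b : ℕ → ℕ) :
    Psi (fun j => (c j : ZMod 32)) (fun j => (b j : ZMod 4)) = F c b := by
  simp only [Psi, F, ZMod.val_natCast, psi_mod]
  rw [Finset.prod_range]

lemma HasOdd_cast (c : ℕ → ℕ) :
    HasOdd (n := 32) (fun j => (c j : ZMod 32)) ↔ ∃ j < 24, c j % 2 = 1 := by
  simp only [HasOdd, ZMod.val_natCast, Nat.mod_mod_of_dvd _ (show 2 ∣ 32 by norm_num)]
  exact ⟨fun ⟨j, h⟩ => ⟨j, j.2, h⟩, fun ⟨j, hj, h⟩ => ⟨⟨j, hj⟩, h⟩⟩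

lemma word_cast (q : Fin 12 → ℕ) :
    word (fun k => (q k : ZMod 32)) = fun j : Fin 24 => ((comb q M j : ℕ) : ZMod 32) := by
  ext j
  simp [word, comb]

lemma term_eq (q : Fin 12 → ℕ) (b : ℕ → ℕ) :
    (if HasOdd (word fun k => (q k : ZMod 32)) then
      Psi (word fun k => (q k : ZMod 32)) (fun j => (b j : ZMod 4)) else 0)
      = term (comb q M) b := by
  rw [word_cast, Psi_cast, term]
  by_cases h : ∃ j < 24, comb q M j % 2 = 1
  · rw [if_pos h, if_pos ((HasOdd_cast _).2 h)]
  · rw [if_neg h, if_neg (fun h' => h ((HasOdd_cast _).1 h'))]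

lemma comb_add {n : ℕ} (q r : Fin n → ℕ) (R : ℕ → ℕ → ℕ) :
    comb (fun k => q k + r k) R = comb q R + comb r R := by
  ext j
  simp [comb, add_mul, Finset.sum_add_distrib]

lemma comb_mul {n : ℕ} (m : ℕ) (q : Fin n → ℕ) (R : ℕ → ℕ → ℕ) :
    comb (fun k => m * q k) R = m • comb q R := by
  ext j
  simp [comb, Finset.mul_sum, mul_assoc]

lemma F_shift (x s b : ℕ → ℕ) :
    F (x + 8 • s) b = C (Complex.I ^ (∑ j ∈ Finset.range 24, s j * b j)) * F x b := by
  simp only [F, Pi.add_apply, Pi.smul_apply, smul_eq_mul, psi_shift, Finset.prod_mul_distrib]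
  rw [← Finset.prod_pow_eq_pow_sum, map_prod]

lemma term_shift (x s b : ℕ → ℕ) :
    term (x + 8 • s) b = C (Complex.I ^ (∑ j ∈ Finset.range 24, s j * b j)) * term x b := by
  have : (∃ j < 24, (x + 8 • s) j % 2 = 1) ↔ ∃ j < 24, x j % 2 = 1 := by
    simp only [Pi.add_apply, Pi.smul_apply, smul_eq_mul]
    refine exists_congr fun j => and_congr_right fun _ => ?_
    omega
  rw [term, term, F_shift]
  by_cases h : ∃ j < 24, x j % 2 = 1
  · rw [if_pos h, if_pos (this.2 h)]
  · rw [if_neg h, if_neg (fun h' => h (this.1 h')), mul_zero]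

/-- Translation of the coefficients by `8` times a unit vector shows that the Fourier component
vanishes off the dual code. -/
lemma Four_dual {b : ℕ → ℕ} (h : Four (fun j => (b j : ZMod 4)) ≠ 0) (i : Fin 12) :
    (∑ j ∈ Finset.range 24, M i j * b j) % 4 = 0 := by
  by_contra hcon
  set z := Complex.I ^ (∑ j ∈ Finset.range 24, M i j * b j) with hz
  have hz1 : z ≠ 1 := by
    rw [hz, Complex.I_pow_eq_pow_mod]
    have : (∑ j ∈ Finset.range 24, M i j * b j) % 4 < 4 := Nat.mod_lt _ (by norm_num)
    generalize (∑ j ∈ Finset.range 24, M i j * b j) % 4 = n at *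
    interval_cases n
    · exact absurd rfl hcon
    · intro h
      have := congrArg Complex.re h
      simp at this
    · rw [Complex.I_sq]; norm_num
    · intro h
      have := congrArg Complex.re h
      simp [pow_succ] at this
  have key : Four (fun j => (b j : ZMod 4)) = C z * Four (fun j => (b j : ZMod 4)) := by
    conv_rhs => rw [Four, Finset.mul_sum]
    refine (Equiv.sum_comp (Equiv.addRight (Pi.single i 8 : Fin 12 → ZMod 32)) _).symm.trans ?_
    refine Finset.sum_congr rfl fun q _ => ?_
    have e1 : q = fun k => (((q k).val : ℕ) : ZMod 32) := by ext k; simp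
    have e2 : (Equiv.addRight (Pi.single i 8 : Fin 12 → ZMod 32)) q
        = fun k => (((q k).val + 8 * (if k = i then 1 else 0) : ℕ) : ZMod 32) := by
      ext k
      by_cases hk : k = i
      · subst hk; simp
      · simp [hk]
    rw [e2]
    conv_rhs => rw [e1]
    rw [term_eq, term_eq, comb_add, comb_mul, term_shift]
    have : comb (fun k : Fin 12 => if k = i then 1 else 0) M = M i := by
      ext j; simp [comb]
    rw [this]
  have h0 : (C (1 - z) : Pol) * Four (fun j => (b j : ZMod 4)) = 0 := by
    rw [C_sub, C_1, sub_mul, one_mul, ← key, sub_self]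
  rcases mul_eq_zero.1 h0 with h1 | h1
  · rw [C_eq_zero, sub_eq_zero] at h1
    exact hz1 h1.symm
  · exact h h1

/-! ### The codewords modulo 8 -/

/-- The digits of an element of `ℤ/32ℤ`. -/
def dig (t : (Bool × Bool) × (Bool × Fin 4)) : ZMod 32 :=
  ((bv t.1.1 + 2 * bv t.1.2 + 4 * bv t.2.1 + 8 * t.2.2 : ℕ) : ZMod 32)

lemma dig_bij : Function.Bijective dig := by
  rw [Fintype.bijective_iff_injective_and_card]
  refine ⟨?_, by simp [ZMod.card]⟩
  unfold Function.Injective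
  decide +kernel

lemma sum_dig (f : (Fin 12 → ZMod 32) → Pol) :
    ∑ q, f q = ∑ u : Fin 12 → Bool, ∑ e : Fin 12 → Bool, ∑ d : Fin 12 → Bool,
      ∑ g : Fin 12 → Fin 4, f fun k => dig ((u k, e k), (d k, g k)) := by
  let ε : ((Fin 12 → Bool) × (Fin 12 → Bool)) × ((Fin 12 → Bool) × (Fin 12 → Fin 4))
      ≃ (Fin 12 → ZMod 32) :=
    ((Equiv.prodCongr (Equiv.arrowProdEquivProdArrow (Fin 12) (fun _ => Bool) (fun _ => Bool)).symm
      (Equiv.arrowProdEquivProdArrow (Fin 12) (fun _ => Bool) (fun _ => Fin 4)).symm).trans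
      (Equiv.arrowProdEquivProdArrow (Fin 12) (fun _ => Bool × Bool)
        (fun _ => Bool × Fin 4)).symm).trans
      (Equiv.piCongrRight fun _ => Equiv.ofBijective dig dig_bij)
  rw [← ε.sum_comp, Fintype.sum_prod_type, Fintype.sum_prod_type]
  refine Finset.sum_congr rfl fun u _ => Finset.sum_congr rfl fun e _ => ?_
  rw [Fintype.sum_prod_type]
  rfl

/-- On the dual code the Fourier component is a sum over the codewords modulo `8`. -/
lemma Four_eq {b : ℕ → ℕ} (hb : ∀ i < 12, (∑ j ∈ Finset.range 24, M i j * b j) % 4 = 0) :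
    Four (fun j => (b j : ZMod 4)) = 4 ^ 12 * ∑ u : Fin 12 → Bool,
      if ∃ j < 24, (0 + comb (fun k => bv (u k)) M) j % 2 = 1 then
        sum2 (0 + comb (fun k => bv (u k)) M) b else 0 := by
  rw [Four, sum_dig, Finset.mul_sum]
  refine Finset.sum_congr rfl fun u _ => ?_
  have h1 : ∀ (e d : Fin 12 → Bool) (g : Fin 12 → Fin 4),
      (if HasOdd (word fun k => dig ((u k, e k), (d k, g k))) then
        Psi (word fun k => dig ((u k, e k), (d k, g k))) (fun j => (b j : ZMod 4)) else 0)
      = term (0 + comb (fun k => bv (u k)) M + comb (fun k => bv (e k)) (fun k => 2 • M k)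
        + comb (fun k => bv (d k)) (fun k => 4 • M k)) b := by
    intro e d g
    have hd : (fun k => dig ((u k, e k), (d k, g k))) = fun k =>
      ((bv (u k) + 2 * bv (e k) + 4 * bv (d k) + 8 * (g k : ℕ) : ℕ) : ZMod 32) := rfl
    rw [hd, term_eq, comb_add, comb_add, comb_add, comb_mul, comb_mul, comb_mul, term_shift,
      comb_smul, comb_smul, zero_add]
    have : (∑ j ∈ Finset.range 24, comb (fun k : Fin 12 => (g k : ℕ)) M j * b j) % 4 = 0 := by
      simp only [comb, Finset.sum_mul]
      rw [Finset.sum_comm]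
      apply Nat.mod_eq_zero_of_dvd
      refine Finset.dvd_sum fun k _ => ?_
      simp only [mul_assoc]
      rw [← Finset.mul_sum]
      exact (Nat.dvd_of_mod_eq_zero (hb k k.2)).mul_left _
    rw [I_pow_congr (b := 0) this, pow_zero, C_1, one_mul]
  have h2 : ∀ e d : Fin 12 → Bool,
      (∃ j < 24, (0 + comb (fun k => bv (u k)) M + comb (fun k => bv (e k)) (fun k => 2 • M k)
        + comb (fun k => bv (d k)) (fun k => 4 • M k)) j % 2 = 1) ↔
      ∃ j < 24, (0 + comb (fun k => bv (u k)) M) j % 2 = 1 := by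
    intro e d
    rw [comb_smul, comb_smul]
    simp only [Pi.add_apply, Pi.smul_apply, smul_eq_mul]
    refine exists_congr fun j => and_congr_right fun _ => ?_
    omega
  have h3 : ∀ t : Pol, ∑ _g : Fin 12 → Fin 4, t = 4 ^ 12 * t := fun t => by
    rw [Finset.sum_const, Finset.card_univ, Fintype.card_fun, Fintype.card_fin, Fintype.card_fin,
      nsmul_eq_mul, Nat.cast_pow, Nat.cast_ofNat]
  simp only [h1, h3, ← Finset.mul_sum]
  congr 1
  by_cases h : ∃ j < 24, (0 + comb (fun k => bv (u k)) M) j % 2 = 1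
  · rw [if_pos h]
    exact Finset.sum_congr rfl fun e _ => Finset.sum_congr rfl fun d _ => if_pos ((h2 e d).2 h)
  · rw [if_neg h]
    exact Finset.sum_eq_zero fun e _ => Finset.sum_eq_zero fun d _ =>
      if_neg fun h' => h ((h2 e d).1 h')

/-! ### Reduction to the words of the Golay code -/

/-- The binary word of the Golay code with coefficients the binary digits of `m`, as a number. -/
def W (m : ℕ) : ℕ := pk 2 24 fun j => bvec m j % 2

/-- The sum of the Fourier components over the vectors congruent to the binary word `w`. -/
def S (w : ℕ) : Pol :=
  ∑ b : Fin 24 → ZMod 4, if ∀ j : Fin 24, (b j).val % 2 = w / 2 ^ (j : ℕ) % 2 then Four b else 0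

lemma W_bit (m : ℕ) {j : ℕ} (hj : j < 24) : W m / 2 ^ j % 2 = bvec m j % 2 :=
  pk_digit (f := fun j => bvec m j % 2) (fun _ => Nat.mod_lt _ (by norm_num)) hj

lemma dual_rows : ∀ i < 12, ∀ k < 12, (N k i + M i (12 + k)) % 4 = 0 := by decide +kernel

lemma orth_rows : ∀ i < 12, ∀ k < 12, (∑ j ∈ Finset.range 24, M i j * N k j) % 4 = 0 := by
  decide +kernel

lemma comb_N_orth (y : Fin 12 → ℕ) {i : ℕ} (hi : i < 12) :
    (∑ j ∈ Finset.range 24, M i j * comb y N j) % 4 = 0 := by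
  simp only [comb, Finset.mul_sum]
  rw [Finset.sum_comm]
  apply Nat.mod_eq_zero_of_dvd
  refine Finset.dvd_sum fun k _ => ?_
  have := (Nat.dvd_of_mod_eq_zero (orth_rows i hi k k.2)).mul_left (y k)
  rw [Finset.mul_sum] at this
  convert this using 2
  ring

lemma eq_comb_of_orth {b : ℕ → ℕ}
    (h : ∀ i < 12, (∑ j ∈ Finset.range 24, M i j * b j) % 4 = 0) {j : ℕ} (hj : j < 24) :
    b j % 4 = comb (fun k : Fin 12 => b (12 + k)) N j % 4 := by
  rcases Nat.lt_or_ge j 12 with h12 | h12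
  · have h1 := h j h12
    rw [show 24 = 12 + 12 by rfl, Finset.sum_range_add,
      Finset.sum_eq_single_of_mem j (Finset.mem_range.2 h12)
        (fun i hi hij => by rw [M_sys j h12 i (Finset.mem_range.1 hi), if_neg hij.symm, zero_mul]),
      M_sys j h12 j h12, if_pos rfl, one_mul, Finset.sum_range] at h1
    have h2 : (comb (fun k : Fin 12 => b (12 + k)) N j
        + ∑ k : Fin 12, M j (12 + k) * b (12 + k)) % 4 = 0 := by
      simp only [comb]
      rw [← Finset.sum_add_distrib]
      apply Nat.mod_eq_zero_of_dvd
      refine Finset.dvd_sum fun k _ => ?_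
      have := (Nat.dvd_of_mod_eq_zero (dual_rows j h12 k k.2)).mul_left (b (12 + k))
      rw [mul_add] at this
      rwa [mul_comm (M j (12 + k))]
    omega
  · obtain ⟨k, rfl⟩ := Nat.exists_eq_add_of_le h12
    have := comb_N (w := fun k : Fin 12 => b (12 + k)) ⟨k, by omega⟩
    simp only at this
    rw [this]

/-- The representatives in `ℕ` of the coordinates of `b`. -/
def rep (b : Fin 24 → ZMod 4) (j : ℕ) : ℕ := if h : j < 24 then (b ⟨j, h⟩).val else 0

lemma rep_fin (b : Fin 24 → ZMod 4) (j : Fin 24) : rep b j = (b j).val := by simp [rep]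

lemma rep_cast (b : Fin 24 → ZMod 4) : (fun j : Fin 24 => (rep b j : ZMod 4)) = b := by
  ext j; simp [rep]

lemma Four_rep {b : Fin 24 → ZMod 4} (h : Four b ≠ 0) {j : ℕ} (hj : j < 24) :
    rep b j % 4 = comb (fun k : Fin 12 => rep b (12 + k)) N j % 4 := by
  refine eq_comb_of_orth (fun i hi => ?_) hj
  rw [← rep_cast b] at h
  exact Four_dual h ⟨i, hi⟩

lemma pk_bits (n : ℕ) {m : ℕ} (hm : m < 2 ^ n) : pk 2 n (fun k => m / 2 ^ k % 2) = m := by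
  induction n generalizing m with
  | zero => simp at hm; simp [pk, hm]
  | succ n ih =>
    have := ih (m := m / 2) (by rw [pow_succ] at hm; omega)
    simp only [pk, pow_zero, Nat.div_one]
    simp only [Nat.div_div_eq_div_mul, ← pow_succ'] at this
    rw [this]
    omega

lemma comb_mod (m : ℕ) {n : ℕ} {x y : Fin n → ℕ} (h : ∀ k, x k % m = y k % m)
    (R : ℕ → ℕ → ℕ) (j : ℕ) : comb x R j % m = comb y R j % m := by
  simp only [comb]
  rw [Finset.sum_nat_mod, Finset.sum_nat_mod (f := fun k => y k * R k j)]
  congr 1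
  exact Finset.sum_congr rfl fun k _ => by rw [Nat.mul_mod, h, ← Nat.mul_mod]

lemma total_eq : (∑ b : Fin 24 → ZMod 4, if HasOdd b then Four b else 0)
    = ∑ m ∈ Finset.Ico 1 4096, S (W m) := by
  simp only [S]
  rw [Finset.sum_comm]
  refine Finset.sum_congr rfl fun b _ => ?_
  by_cases h : Four b = 0
  · simp [h]
  have hb := fun j hj => Four_rep h (j := j) hj
  obtain ⟨m0, hm0⟩ : ∃ m0, m0 = pk 2 12 (fun k => rep b (12 + k) % 2) := ⟨_, rfl⟩
  have hlt : m0 < 4096 := by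
    have : ∀ n, ∀ f : ℕ → ℕ, (∀ k, f k < 2) → pk 2 n f < 2 ^ n := by
      intro n
      induction n with
      | zero => intro f _; simp [pk]
      | succ n ih =>
        intro f hf
        have := ih (fun k => f (k + 1)) (fun k => hf _)
        have := hf 0
        simp only [pk, pow_succ]
        omega
    rw [hm0]
    exact this 12 _ fun k => Nat.mod_lt _ (by norm_num)
  have hdig : ∀ k < 12, m0 / 2 ^ k % 2 = rep b (12 + k) % 2 := fun k hk => by
    rw [hm0]
    exact pk_digit (f := fun k => rep b (12 + k) % 2) (fun _ => Nat.mod_lt _ (by norm_num)) hk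
  have hpar : ∀ j < 24, rep b j % 2 = comb (fun k : Fin 12 => rep b (12 + k)) N j % 2 := by
    intro j hj
    have := hb j hj
    omega
  have hW : ∀ j < 24, rep b j % 2 = W m0 / 2 ^ j % 2 := by
    intro j hj
    rw [W_bit _ hj, hpar j hj, bvec]
    refine comb_mod 2 (fun k => ?_) N j
    rw [hdig k k.2, Nat.mod_mod]
  have iff1 : ∀ m < 4096, (∀ j : Fin 24, (b j).val % 2 = W m / 2 ^ (j : ℕ) % 2) ↔ m = m0 := by
    intro m hm
    constructor
    · intro hj
      rw [← pk_bits 12 (m := m) hm, hm0]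
      refine pk_congr fun k hk => ?_
      have hj' : (b ⟨12 + k, by omega⟩).val % 2 = W m / 2 ^ (12 + k) % 2 := hj ⟨12 + k, by omega⟩
      have hr : rep b (12 + k) = (b ⟨12 + k, by omega⟩).val := rep_fin b ⟨12 + k, by omega⟩
      rw [hr, hj', W_bit _ (by omega), bvec_upper _ _ hk, Nat.mod_mod]
    · intro hmm j
      rw [hmm, ← rep_fin]
      exact hW j j.2
  have iff2 : HasOdd b ↔ m0 ≠ 0 := by
    constructor
    · rintro ⟨j, hj⟩ h0
      have h1 := hpar j j.2
      rw [rep_fin, hj, comb_mod 2 (y := fun _ => 0) (fun k => ?_)] at h1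
      · simp [comb] at h1
      · rw [← hdig k k.2, h0]; simp
    · intro h0
      by_contra hcon
      apply h0
      rw [hm0, pk_eq_sum]
      refine Finset.sum_eq_zero fun k hk => ?_
      have hk' : 12 + k < 24 := by have := Finset.mem_range.1 hk; omega
      have : ¬ (b ⟨12 + k, hk'⟩).val % 2 = 1 := fun h' => hcon ⟨_, h'⟩
      have hr : rep b (12 + k) = (b ⟨12 + k, hk'⟩).val := rep_fin b ⟨12 + k, hk'⟩
      simp only [show rep b (12 + k) % 2 = 0 by omega, zero_mul]
  have : ∀ m ∈ Finset.Ico 1 4096,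
      (if ∀ j : Fin 24, (b j).val % 2 = W m / 2 ^ (j : ℕ) % 2 then Four b else 0)
        = if m = m0 then Four b else 0 := by
    intro m hm
    have := iff1 m (Finset.mem_Ico.1 hm).2
    by_cases hmm : m = m0
    · rw [if_pos hmm, if_pos (this.2 hmm)]
    · rw [if_neg hmm, if_neg (fun h' => hmm (this.1 h'))]
  rw [Finset.sum_congr rfl this, Finset.sum_ite_eq']
  by_cases h0 : m0 = 0
  · rw [if_neg (fun h' => iff2.1 h' h0), if_neg (by simp [h0])]
  · rw [if_pos (iff2.2 h0), if_pos (Finset.mem_Ico.2 ⟨by omega, hlt⟩)]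

lemma S_W {m : ℕ} : S (W m) = 4 ^ 12 * Q (bvec m) := by
  have hR : 4 ^ 12 * Q (bvec m) = ∑ w : Fin 12 → Bool,
      Four (fun j => ((bvec m + comb (fun k => bv (w k)) (fun k => 2 • N k)) j : ZMod 4)) := by
    have hc : ∀ w : Fin 12 → Bool, bvec m + comb (fun k => bv (w k)) (fun k => 2 • N k)
        = comb (fun k : Fin 12 => m / 2 ^ (k : ℕ) % 2 + 2 * bv (w k)) N := fun w => by
      rw [comb_add, comb_mul, comb_smul, bvec]
    have hF := fun w : Fin 12 → Bool =>
      Four_eq (b := bvec m + comb (fun k => bv (w k)) (fun k => 2 • N k))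
        fun i hi => by rw [hc]; exact comb_N_orth _ hi
    rw [Finset.sum_congr rfl fun w _ => hF w, ← Finset.mul_sum, Finset.sum_comm, Q]
    refine congrArg _ ?_
    refine Finset.sum_congr rfl fun u _ => ?_
    by_cases h : ∃ j < 24, (0 + comb (fun k => bv (u k)) M) j % 2 = 1
    · simp only [if_pos h, sumN]
    · simp only [if_neg h, Finset.sum_const_zero]
  rw [hR, S]
  symm
  rw [← Finset.sum_filter]
  refine Finset.sum_of_injOn (fun (w : Fin 12 → Bool) (j : Fin 24) =>
    ((bvec m + comb (fun k => bv (w k)) (fun k => 2 • N k)) j : ZMod 4)) ?_ ?_ ?_ ?_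
  · intro w _ w' _ h
    ext k
    have h1 : ((bvec m + comb (fun k => bv (w k)) (fun k => 2 • N k)) (12 + k) : ZMod 4)
        = ((bvec m + comb (fun k => bv (w' k)) (fun k => 2 • N k)) (12 + k) : ZMod 4) :=
      congrFun h ⟨12 + k, by omega⟩
    rw [comb_smul, comb_smul] at h1
    simp only [Pi.add_apply, Pi.smul_apply, smul_eq_mul, comb_N] at h1
    have h2 := (ZMod.natCast_eq_natCast_iff' _ _ 4).1 (by exact_mod_cast h1)
    cases h3 : w k <;> cases h4 : w' k <;> simp [h3, h4, bv] at h2 ⊢ <;> omega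
  · intro w _
    simp only [Finset.coe_filter, Finset.mem_univ, true_and, Set.mem_ofPred_eq]
    intro j
    rw [W_bit _ j.2, comb_smul, ZMod.val_natCast]
    simp only [Pi.add_apply, Pi.smul_apply, smul_eq_mul]
    omega
  · intro b hb hb'
    by_contra h
    apply hb'
    simp only [Finset.mem_filter, Finset.mem_univ, true_and] at hb
    refine ⟨fun k => decide (2 ≤ rep b (12 + k)), by simp, ?_⟩
    have hc : bvec m + comb (fun k : Fin 12 => bv (decide (2 ≤ rep b (12 + k)))) (fun k => 2 • N k)
        = comb (fun k : Fin 12 => rep b (12 + k)) N := by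
      rw [comb_smul, ← comb_mul, bvec, ← comb_add]
      congr 1
      ext k
      have h1 : (b ⟨12 + k, by omega⟩).val % 2 = W m / 2 ^ (12 + (k : ℕ)) % 2 :=
        hb ⟨12 + k, by omega⟩
      have hr : rep b (12 + k) = (b ⟨12 + k, by omega⟩).val := rep_fin b ⟨12 + k, by omega⟩
      rw [W_bit _ (by omega), bvec_upper _ _ k.2, Nat.mod_mod] at h1
      have h4 := ZMod.val_lt (b ⟨12 + k, by omega⟩)
      rw [← h1, hr]
      by_cases h5 : 2 ≤ (b ⟨12 + k, by omega⟩).val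
      · simp only [h5, decide_true, bv, cond_true]; omega
      · simp only [h5, decide_false, bv, cond_false]; omega
    beta_reduce
    rw [hc]
    ext j
    have h1 := Four_rep h j.2
    rw [← ZMod.natCast_eq_natCast_iff'] at h1
    simp only [← h1]
    exact congrFun (rep_cast b) j
  · intro w _
    rfl

/-! ### Symmetries -/

/-- The word `w` with its bits permuted: bit `j` of the result is bit `l[j]` of `w`. -/
def pm (l : List ℕ) : ℕ → ℕ :=
  List.rec (motive := fun _ => ℕ → ℕ) (fun _ => 0)
    (fun p _ ih w => Nat.add (Nat.mod (Nat.div w (Nat.pow 2 p)) 2) (Nat.mul 2 (ih w))) l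

lemma pm_eq (l : List ℕ) (w : ℕ) :
    pm l w = pk 2 l.length fun j => w / 2 ^ (l.getD j 0) % 2 := by
  induction l with
  | nil => rfl
  | cons p l ih =>
    have : pm (p :: l) w = w / 2 ^ p % 2 + 2 * pm l w := rfl
    rw [this, ih]
    simp [pk]

lemma pm_bit {l : List ℕ} {j : ℕ} (hj : j < l.length) (w : ℕ) :
    pm l w / 2 ^ j % 2 = w / 2 ^ (l.getD j 0) % 2 := by
  rw [pm_eq]
  exact pk_digit (f := fun j => w / 2 ^ (l.getD j 0) % 2) (fun _ => Nat.mod_lt _ (by norm_num)) hj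

lemma word_apply (q : Fin 12 → ZMod 32) (i : Fin 12) : word q (Fin.castLE (by norm_num) i) = q i := by
  simp only [word]
  rw [Finset.sum_eq_single i]
  · simp [M_sys i i.2 i i.2]
  · intro k _ hk
    have := M_sys k k.2 i i.2
    rw [if_neg (fun h => hk (Fin.ext h))] at this
    simp [this]
  · simp

/-- A permutation of the coordinates which maps the rows of the generator matrix to codewords leaves
the Fourier components invariant. -/
lemma Four_perm (π : Equiv.Perm (Fin 24))
    (h : ∀ (k : Fin 12) (j : Fin 24),
      (∑ i : Fin 12, M k (π (Fin.castLE (by norm_num) i)) * M i j) % 32 = M k (π j) % 32)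
    (b : Fin 24 → ZMod 4) : Four (b ∘ π) = Four b := by
  have hw : ∀ q : Fin 12 → ZMod 32,
      word (fun i => word q (π (Fin.castLE (by norm_num) i))) = word q ∘ π := by
    intro q
    ext j
    simp only [word, Function.comp_apply, Finset.sum_mul]
    rw [Finset.sum_comm]
    refine Finset.sum_congr rfl fun k _ => ?_
    have := (ZMod.natCast_eq_natCast_iff' _ _ 32).2 (h k j)
    rw [← this]
    push_cast
    rw [Finset.mul_sum]
    exact Finset.sum_congr rfl fun i _ => by ring
  have hbij : Function.Bijective fun (q : Fin 12 → ZMod 32) (i : Fin 12) =>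
      word q (π (Fin.castLE (by norm_num) i)) := by
    rw [← Finite.injective_iff_bijective]
    intro q q' hq
    have h1 : word q ∘ π = word q' ∘ π := by
      rw [← hw, ← hw]
      exact congrArg word hq
    have h2 : word q = word q' := π.surjective.injective_comp_right h1
    ext i
    rw [← word_apply q, ← word_apply q', h2]
  rw [Four, Four]
  refine ((Equiv.ofBijective _ hbij).sum_comp _).symm.trans ?_
  refine Finset.sum_congr rfl fun q _ => ?_
  simp only [Equiv.ofBijective_apply]
  rw [hw]
  have hP : Psi (word q ∘ π) (b ∘ π) = Psi (word q) b :=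
    Equiv.prod_comp π fun j => psi (word q j).val (b j).val
  have hO : HasOdd (word q ∘ π) ↔ HasOdd (word q) :=
    ⟨fun ⟨j, hj⟩ => ⟨π j, hj⟩, fun ⟨j, hj⟩ => ⟨π.symm j, by simpa using hj⟩⟩
  rw [hP]
  by_cases ho : HasOdd (word q)
  · rw [if_pos ho, if_pos (hO.2 ho)]
  · rw [if_neg ho, if_neg (fun h' => ho (hO.1 h'))]

lemma S_pm {l : List ℕ} (hl : l.length = 24) (hlt : ∀ j < 24, l.getD j 0 < 24)
    (hinj : ∀ i < 24, ∀ j < 24, l.getD i 0 = l.getD j 0 → i = j)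
    (h : ∀ k < 12, ∀ j < 24,
      (∑ i ∈ Finset.range 12, M k (l.getD i 0) * M i j) % 32 = M k (l.getD j 0) % 32)
    (w : ℕ) : S (pm l w) = S w := by
  let f : Fin 24 → Fin 24 := fun j => ⟨l.getD j 0, hlt j j.2⟩
  have hf : Function.Bijective f := by
    rw [← Finite.injective_iff_bijective]
    intro i j hij
    exact Fin.ext (hinj i i.2 j j.2 (congrArg Fin.val hij))
  let π : Equiv.Perm (Fin 24) := Equiv.ofBijective f hf
  have hπ : ∀ j, ((π j : Fin 24) : ℕ) = l.getD j 0 := fun j => rfl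
  have hF := Four_perm π (by
    intro k j
    have := h k k.2 j j.2
    rw [Finset.sum_range] at this
    exact this)
  rw [S, S]
  have hb : Function.Bijective fun b : Fin 24 → ZMod 4 => b ∘ π := by
    rw [← Finite.injective_iff_bijective]
    exact π.surjective.injective_comp_right
  refine ((Equiv.ofBijective _ hb).sum_comp _).symm.trans ?_
  refine Finset.sum_congr rfl fun b _ => ?_
  simp only [Equiv.ofBijective_apply]
  rw [hF]
  have hiff : (∀ j : Fin 24, ((b ∘ π) j).val % 2 = pm l w / 2 ^ (j : ℕ) % 2)
      ↔ ∀ j : Fin 24, (b j).val % 2 = w / 2 ^ (j : ℕ) % 2 := by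
    constructor
    · intro hj j
      obtain ⟨i, rfl⟩ := π.surjective j
      have := hj i
      rwa [pm_bit (by rw [hl]; exact i.2), ← hπ] at this
    · intro hj i
      rw [pm_bit (by rw [hl]; exact i.2), ← hπ]
      exact hj (π i)
  by_cases hc : ∀ j : Fin 24, (b j).val % 2 = w / 2 ^ (j : ℕ) % 2
  · rw [if_pos hc, if_pos (hiff.2 hc)]
  · rw [if_neg hc, if_neg (fun h' => hc (hiff.1 h'))]

/-- The cyclic shift `j ↦ j + 1` of the first 23 coordinates. -/
def sigma : List ℕ := [1, 2, 3, 4, 5, 6, 7, 8, 9, 10, 11, 12, 13, 14, 15, 16, 17, 18, 19, 20, 21,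
  22, 0, 23]

/-- The multiplier `j ↦ 2 * j` on the first 23 coordinates. -/
def tau : List ℕ := [0, 2, 4, 6, 8, 10, 12, 14, 16, 18, 20, 22, 1, 3, 5, 7, 9, 11, 13, 15, 17, 19,
  21, 23]

lemma S_sigma (w : ℕ) : S (pm sigma w) = S w :=
  S_pm rfl (by decide) (by decide +kernel) (by decide +kernel) w

lemma S_tau (w : ℕ) : S (pm tau w) = S w :=
  S_pm rfl (by decide) (by decide +kernel) (by decide +kernel) w

/-! ### The orbits of the words of the Golay code -/

/-- The parities of `n` packed entries, packed in base `2`. -/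
def colp (n : ℕ) : ℕ → ℕ :=
  Nat.rec (motive := fun _ => ℕ → ℕ) (fun _ => 0)
    (fun _ ih x => Nat.add (Nat.mod x 2) (Nat.mul 2 (strict (Nat.div x 65536) ih))) n

lemma colp_pk (n : ℕ) (f : ℕ → ℕ) (h : ∀ j, f j < base) :
    colp n (pk base n f) = pk 2 n (fun j => f j % 2) := by
  induction n generalizing f with
  | zero => rfl
  | succ n ih =>
    have : colp (n + 1) (pk base (n + 1) f) = pk base (n + 1) f % 2
        + 2 * (strict (pk base (n + 1) f / 65536) (colp n)) := rfl
    rw [this, strict_eq, pk_div (h 0), ih _ (fun j => h (j + 1)),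
      ← Nat.mod_mod_of_dvd _ (show 2 ∣ base by norm_num), pk_mod (h 0)]
    rfl

lemma colp_brow (m : ℕ) : colp 24 (brow m) = W m := by
  rw [← pk_bvec, colp_pk 24 _ fun j => (bvec_le m j).trans_lt (by norm_num)]
  rfl

/-- The number `2 ^ m` if `w` is the word `W m`, and `0` otherwise. -/
def mark (w : ℕ) : ℕ :=
  strict (Nat.div w 4096) fun m => cond (Nat.beq (colp 24 (brow m)) w) (Nat.pow 2 m) 0

lemma mark_spec {w m : ℕ} (h : (mark w).testBit m = true) : W m = w := by
  rw [mark, strict_eq] at h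
  cases hb : Nat.beq (colp 24 (brow (Nat.div w 4096))) w with
  | false => rw [hb] at h; simp at h
  | true =>
    rw [hb, cond_true] at h
    have h1 : Nat.div w 4096 = m := by
      have : (2 ^ (Nat.div w 4096)).testBit m = true := h
      rw [Nat.testBit_two_pow] at this
      simpa using this
    rw [← h1, ← colp_brow]
    exact Nat.eq_of_beq_eq_true hb

/-- The marks of `n` successive cyclic shifts of a word. -/
def shifts (n : ℕ) : ℕ → ℕ :=
  Nat.rec (motive := fun _ => ℕ → ℕ) (fun _ => 0)
    (fun _ ih w => Nat.lor (mark w) (strict (pm sigma w) ih)) n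

/-- The marks of the cyclic shifts of `n` successive images of a word under the multiplier. -/
def orbit (n : ℕ) : ℕ → ℕ :=
  Nat.rec (motive := fun _ => ℕ → ℕ) (fun _ => 0)
    (fun _ ih w => Nat.lor (shifts 23 w) (strict (pm tau w) ih)) n

/-- The marks of the orbits of the words `W r`, for `r` in the given list. -/
def orbits (l : List ℕ) : ℕ :=
  List.rec (motive := fun _ => ℕ) 0
    (fun r _ ih => Nat.lor (strict (colp 24 (brow r)) (orbit 11)) ih) l

lemma testBit_lor {x y m : ℕ} (h : (Nat.lor x y).testBit m = true) :
    x.testBit m = true ∨ y.testBit m = true := by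
  have h' : (x ||| y).testBit m = true := h
  rw [Nat.testBit_or] at h'
  simpa using h'

lemma shifts_spec (n : ℕ) {w m : ℕ} (h : (shifts n w).testBit m = true) : S (W m) = S w := by
  induction n generalizing w with
  | zero => exact absurd h (by simp [shifts])
  | succ n ih =>
    have e : shifts (n + 1) w = Nat.lor (mark w) (strict (pm sigma w) (shifts n)) := rfl
    rw [e, strict_eq] at h
    rcases testBit_lor h with h | h
    · rw [mark_spec h]
    · rw [ih h, S_sigma]

lemma orbit_spec (n : ℕ) {w m : ℕ} (h : (orbit n w).testBit m = true) : S (W m) = S w := by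
  induction n generalizing w with
  | zero => exact absurd h (by simp [orbit])
  | succ n ih =>
    have e : orbit (n + 1) w = Nat.lor (shifts 23 w) (strict (pm tau w) (orbit n)) := rfl
    rw [e, strict_eq] at h
    rcases testBit_lor h with h | h
    · exact shifts_spec 23 h
    · rw [ih h, S_tau]

lemma orbits_spec {l : List ℕ} {m : ℕ} (h : (orbits l).testBit m = true) :
    ∃ r ∈ l, S (W m) = S (W r) := by
  induction l with
  | nil => exact absurd h (by simp [orbits])
  | cons r l ih =>
    have e : orbits (r :: l) = Nat.lor (strict (colp 24 (brow r)) (orbit 11)) (orbits l) := rfl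
    rw [e, strict_eq, colp_brow] at h
    rcases testBit_lor h with h | h
    · exact ⟨r, by simp, orbit_spec 11 h⟩
    · obtain ⟨r', hr', h'⟩ := ih h
      exact ⟨r', by simp [hr'], h'⟩

/-- The number of the ones among the first `2 ^ k` binary digits of `x`. -/
def ones (k : ℕ) : ℕ → ℕ :=
  Nat.rec (motive := fun _ => ℕ → ℕ) (fun x => Nat.mod x 2)
    (fun k ih x => Nat.add (ih x) (strict (Nat.div x (Nat.pow 2 (Nat.pow 2 k))) ih)) k

lemma ones_eq (k x : ℕ) : ones k x = ∑ j ∈ Finset.range (2 ^ k), x / 2 ^ j % 2 := by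
  induction k generalizing x with
  | zero =>
    simp only [pow_zero, Finset.sum_range_one, Nat.div_one]
    rfl
  | succ k ih =>
    have : ones (k + 1) x = ones k x + strict (x / 2 ^ (2 ^ k)) (ones k) := rfl
    rw [this, strict_eq, ih, ih, pow_succ 2 k, mul_two, Finset.sum_range_add]
    congr 1
    exact Finset.sum_congr rfl fun j _ => by rw [Nat.div_div_eq_div_mul, pow_add]

lemma ones_Ico {x : ℕ} (h : x % 2 = 0) :
    ∑ m ∈ Finset.Ico 1 4096, x / 2 ^ m % 2 = ones 12 x := by
  rw [ones_eq, show 2 ^ 12 = 4096 by norm_num, Finset.range_eq_Ico,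
    Finset.sum_eq_sum_Ico_succ_bot (show 0 < 4096 by norm_num) fun m => x / 2 ^ m % 2,
    pow_zero, Nat.div_one, h, zero_add]

set_option maxRecDepth 100000 in
lemma orbits_all : Nat.beq (Nat.lor (orbits octReps) (orbits otherReps)) (2 ^ 4096 - (1 + 1))
    = true := by
  decide +kernel

lemma orbits_oct : Nat.beq (strict (orbits octReps) (ones 12)) 759 = true := by
  decide +kernel

lemma mem_orbits {m : ℕ} (h1 : 1 ≤ m) (h2 : m < 4096) :
    (orbits octReps).testBit m = true ∨ (orbits otherReps).testBit m = true := by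
  apply testBit_lor
  rw [Nat.eq_of_beq_eq_true orbits_all, Nat.testBit_two_pow_sub_succ (by
      calc 1 < 2 ^ 1 := by norm_num
        _ ≤ 2 ^ 4096 := Nat.pow_le_pow_right (by norm_num) (by norm_num))]
  obtain ⟨k, rfl⟩ := Nat.exists_eq_add_of_le h1
  rw [Nat.add_comm] at h2 ⊢
  simpa [Nat.testBit_succ] using h2

/-- The part of the enumerator coming from pairs of words with odd coordinates. -/
lemma total : (∑ b : Fin 24 → ZMod 4, if HasOdd b then Four b else 0)
    = 4 ^ 12 * (759 * octPol) := by
  have hv : ∀ m ∈ Finset.Ico 1 4096,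
      S (W m) = ((orbits octReps / 2 ^ m % 2 : ℕ) : Pol) * (4 ^ 12 * octPol) := by
    intro m hm
    obtain ⟨h1, h2⟩ := Finset.mem_Ico.1 hm
    by_cases h : (orbits octReps).testBit m = true
    · obtain ⟨r, hr, e⟩ := orbits_spec h
      rw [Nat.testBit_eq_decide_div_mod_eq, decide_eq_true_eq] at h
      rw [e, S_W, Q_oct hr, h, Nat.cast_one, one_mul]
    · obtain ⟨r, hr, e⟩ := orbits_spec ((mem_orbits h1 h2).resolve_left h)
      rw [Nat.testBit_eq_decide_div_mod_eq, decide_eq_true_eq] at h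
      rw [e, S_W, Q_other hr, Nat.mod_two_ne_one.1 h, Nat.cast_zero, zero_mul, mul_zero]
  have h0 : orbits octReps % 2 = 0 := by
    apply Nat.eq_of_beq_eq_true
    decide +kernel
  have hs := ones_Ico h0
  rw [← strict_eq (orbits octReps) (ones 12), Nat.eq_of_beq_eq_true orbits_oct] at hs
  rw [total_eq, Finset.sum_congr rfl hv, ← Finset.sum_mul, ← Nat.cast_sum, hs]
  push_cast
  ring

/-! ### The monomials divisible by two variables -/

lemma coeff_divPart {σ : Type*} (A : MvPolynomial σ ℚ) (i j : σ) (d : σ →₀ ℕ) :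
    coeff d (divPart A i j) = if d i ≠ 0 ∧ d j ≠ 0 then coeff d A else 0 := by
  rw [divPart, coeff_sum]
  simp only [coeff_monomial]
  rw [Finset.sum_ite_eq']
  by_cases h : d i ≠ 0 ∧ d j ≠ 0
  · rw [if_pos h]
    by_cases h' : coeff d A = 0
    · rw [h']; exact ite_self _
    · rw [if_pos (Finset.mem_filter.2 ⟨mem_support_iff.2 h', h⟩)]
  · rw [if_neg h, if_neg (by simp only [Finset.mem_filter]; exact fun h' => h h'.2)]

/-- The image of the variable counting the coordinates with the valuation of `a`. -/
def phi (a : ZMod 32) : MvPolynomial (Fin 6) ℚ :=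
  if a.val % 2 = 1 then X 0 else if a.val % 4 = 2 then X 1 else if a.val % 8 = 4 then X 2
  else if a.val % 16 = 8 then X 5 - X 4 else if a.val = 16 then X 5 + X 4 - 2 * X 3
  else X 5 + X 4 + 2 * X 3

lemma map_phi (a : ZMod 32) :
    map (algebraMap ℚ ℂ) (phi a) = ∑ b : ZMod 4, psi a.val b.val := by
  have hsum : ∀ f : ZMod 4 → Pol, ∑ b, f b = f 0 + f 1 + f 2 + f 3 := fun f => Fin.sum_univ_four f
  rw [hsum, show (0 : ZMod 4).val = 0 from rfl, show (1 : ZMod 4).val = 1 from rfl,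
    show (2 : ZMod 4).val = 2 from rfl, show (3 : ZMod 4).val = 3 from rfl]
  have ha := ZMod.val_lt a
  have h2 : (C Complex.I : Pol) ^ 2 = -1 := by
    rw [← C_pow, Complex.I_sq, C_neg, C_1]
  have h3 : (C Complex.I : Pol) ^ 3 = -C Complex.I := by
    rw [pow_succ, h2]; ring
  rw [phi]
  generalize a.val = n at ha ⊢
  interval_cases n <;> simp [psi, Complex.I_pow_eq_pow_mod, h2, h3] <;> ring

lemma map_sum_phi : map (algebraMap ℚ ℂ) (∑ q, ∏ j, phi (word q j))
    = ∑ q, ∑ b : Fin 24 → ZMod 4, Psi (word q) b := by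
  rw [map_sum]
  refine Finset.sum_congr rfl fun q _ => ?_
  rw [map_prod]
  simp only [map_phi]
  rw [Finset.prod_univ_sum, Fintype.piFinset_univ]
  rfl

lemma coeff_Psi_of_degreeOf {c : Fin 24 → ZMod 32} {b : Fin 24 → ZMod 4} {i : Fin 6}
    (h : ∀ j, degreeOf i (psi (c j).val (b j).val) = 0) {d : Fin 6 →₀ ℕ} (hd : d i ≠ 0) :
    coeff d (Psi c b) = 0 := by
  by_contra h'
  have h1 := monomial_le_degreeOf i (mem_support_iff.2 h')
  have h2 : degreeOf i (Psi c b) ≤ ∑ j, degreeOf i (psi (c j).val (b j).val) :=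
    degreeOf_prod_le i _ _
  rw [Finset.sum_eq_zero fun j _ => h j] at h2
  omega

lemma degreeOf_X_zero {i k : Fin 6} (h : i ≠ k) : degreeOf i (X k : Pol) = 0 :=
  degreeOf_X_of_ne h

lemma degreeOf_psi_zero {c b : ℕ} (h : c % 2 ≠ 1) : degreeOf 0 (psi c b) = 0 := by
  rw [psi]
  by_cases h1 : c % 8 = 0
  · rw [if_pos h1]
    refine Nat.le_zero.1 ((degreeOf_C_mul_le _ _ _).trans (degreeOf_X_zero ?_).le)
    split_ifs <;> decide
  · rw [if_neg h1]
    by_cases h2 : b % 4 = 0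
    · rw [if_pos h2, if_neg h]
      refine degreeOf_X_zero ?_
      split_ifs <;> decide
    · rw [if_neg h2, degreeOf_zero]

lemma degreeOf_psi_three {c b : ℕ} (h : b % 2 ≠ 1) : degreeOf 3 (psi c b) = 0 := by
  have h' : b % 2 = 0 := by omega
  rw [psi]
  by_cases h1 : c % 8 = 0
  · rw [if_pos h1, if_pos h']
    refine Nat.le_zero.1 ((degreeOf_C_mul_le _ _ _).trans (degreeOf_X_zero ?_).le)
    split_ifs <;> decide
  · rw [if_neg h1]
    by_cases h2 : b % 4 = 0
    · rw [if_pos h2]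
      refine degreeOf_X_zero ?_
      split_ifs <;> decide
    · rw [if_neg h2, degreeOf_zero]

lemma coeff_sum_Psi {d : Fin 6 →₀ ℕ} (h0 : d 0 ≠ 0) (h3 : d 3 ≠ 0) :
    coeff d (∑ q, ∑ b : Fin 24 → ZMod 4, Psi (word q) b) = coeff d (4 ^ 12 * (759 * octPol)) := by
  rw [← total, Finset.sum_comm, coeff_sum, coeff_sum]
  refine Finset.sum_congr rfl fun b _ => ?_
  by_cases hb : HasOdd b
  · rw [if_pos hb, Four, coeff_sum, coeff_sum]
    refine Finset.sum_congr rfl fun q _ => ?_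
    by_cases hq : HasOdd (word q)
    · rw [if_pos hq]
    · rw [if_neg hq, coeff_zero]
      exact coeff_Psi_of_degreeOf (fun j => degreeOf_psi_zero fun h => hq ⟨j, h⟩) h0
  · rw [if_neg hb, coeff_sum, coeff_zero]
    exact Finset.sum_eq_zero fun q _ =>
      coeff_Psi_of_degreeOf (fun j => degreeOf_psi_three fun h => hb ⟨j, h⟩) h3

lemma divPart_sum_phi :
    divPart (((2 : ℚ) ^ 24)⁻¹ • ∑ q, ∏ j, phi (word q j)) 0 3 =
      97152 * X 0 ^ 8 * X 3 ^ 8 *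
        (-(X 1 ^ 4 * X 4 ^ 2 * X 5 ^ 2) + 2 * X 1 ^ 4 * X 2 * X 4 ^ 2 * X 5
          - X 1 ^ 4 * X 2 ^ 2 * X 4 ^ 2 + X 1 ^ 4 * X 4 ^ 4 - X 1 ^ 2 * X 2 ^ 2 * X 4 ^ 4) := by
  set R : MvPolynomial (Fin 6) ℚ := 97152 * X 0 ^ 8 * X 3 ^ 8 *
        (-(X 1 ^ 4 * X 4 ^ 2 * X 5 ^ 2) + 2 * X 1 ^ 4 * X 2 * X 4 ^ 2 * X 5
          - X 1 ^ 4 * X 2 ^ 2 * X 4 ^ 2 + X 1 ^ 4 * X 4 ^ 4 - X 1 ^ 2 * X 2 ^ 2 * X 4 ^ 4) with hR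
  have hmap : map (algebraMap ℚ ℂ) R = 759 * octPol := by
    rw [hR, octPol]
    simp only [map_mul, map_add, map_sub, map_neg, map_pow, map_X, map_ofNat]
    ring
  have h0 : ∀ i : Fin 6, (X i : MvPolynomial (Fin 6) ℚ) ∣ R → ∀ d : Fin 6 →₀ ℕ, d i = 0 →
      coeff d R = 0 := by
    rintro i ⟨P, hP⟩ d hd
    rw [hP, coeff_X_mul', if_neg (by simpa using hd)]
  ext d
  rw [coeff_divPart]
  by_cases hd : d 0 ≠ 0 ∧ d 3 ≠ 0
  · rw [if_pos hd]
    apply (algebraMap ℚ ℂ).injective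
    rw [coeff_smul, smul_eq_mul, map_mul, ← coeff_map, ← coeff_map, map_sum_phi,
      coeff_sum_Psi hd.1 hd.2, hmap,
      show (4 : Pol) ^ 12 = C ((2 : ℂ) ^ 24) by rw [C_pow, map_ofNat]; norm_num, coeff_C_mul,
      ← mul_assoc]
    rw [map_inv₀, map_pow, map_ofNat, inv_mul_cancel₀ (by norm_num), one_mul]
  · rw [if_neg hd]
    symm
    by_cases h : d 0 = 0
    · exact h0 0 (Dvd.dvd.mul_right (Dvd.dvd.mul_right
        (Dvd.dvd.mul_left (dvd_pow_self _ (by norm_num)) _) _) _) d h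
    · exact h0 3 (Dvd.dvd.mul_right (Dvd.dvd.mul_left (dvd_pow_self _ (by norm_num)) _) _) d
        (by by_contra h'; exact hd ⟨h, h'⟩)

/-! ### The substituted enumerator as a sum of products -/

/-- The substitution applied to the symmetrized weight enumerator. -/
def substPol : Fin 6 → MvPolynomial (Fin 6) ℚ :=
  ![X 0, X 1, X 2, X 5 - X 4, X 5 + X 4 - 2 * X 3, X 5 + X 4 + 2 * X 3]

lemma padicVal_iff {n i : ℕ} (hn : n ≠ 0) :
    padicValNat 2 n = i ↔ n % 2 ^ i = 0 ∧ n % 2 ^ (i + 1) ≠ 0 := by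
  have : Fact (Nat.Prime 2) := ⟨Nat.prime_two⟩
  have h1 := padicValNat_dvd_iff_le (p := 2) (a := n) (n := i) hn
  have h2 := padicValNat_dvd_iff_le (p := 2) (a := n) (n := i + 1) hn
  rw [← Nat.dvd_iff_mod_eq_zero, Ne, ← Nat.dvd_iff_mod_eq_zero, h1, h2]
  omega

lemma phi_eq (a : ZMod 32) :
    phi a = (∏ i : Fin 5, if a ≠ 0 ∧ padicValNat 2 a.val = (i : ℕ) then substPol (Fin.castSucc i)
      else 1) * if a = 0 then substPol (Fin.last 5) else 1 := by
  have h0 : a = 0 ↔ a.val = 0 := (ZMod.val_eq_zero a).symm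
  have ha := ZMod.val_lt a
  rw [phi]
  by_cases h : a = 0
  · have : a.val = 0 := h0.1 h
    rw [this]
    simp only [h, ne_eq, not_true_eq_false, false_and, if_false, Finset.prod_const_one, if_true]
    simp [substPol, Fin.last]
  · have hv : a.val ≠ 0 := fun h' => h (h0.2 h')
    simp only [h, ne_eq, not_false_eq_true, true_and, if_false, mul_one, padicVal_iff hv]
    generalize a.val = n at ha hv ⊢
    rw [Fin.prod_univ_five]
    interval_cases n <;> simp_all [substPol]

lemma aeval_swe (D : Submodule (ZMod 32) (Fin 24 → ZMod 32)) :
    aeval substPol (swe 2 5 D) = ∑ c : Fin 24 → ZMod 32, if c ∈ D then ∏ j, phi (c j) else 0 := by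
  rw [swe, map_sum]
  refine Finset.sum_congr rfl fun c _ => ?_
  by_cases hc : c ∈ D
  · rw [if_pos hc, if_pos hc]
    simp only [map_mul, map_prod, map_pow, aeval_X, phi_eq]
    rw [Finset.prod_mul_distrib, Finset.prod_comm]
    refine congrArg₂ (· * ·) ?_ ?_
    · refine Finset.prod_congr rfl fun i _ => ?_
      rw [← Finset.prod_const, Finset.prod_filter]
    · rw [← Finset.prod_const, Finset.prod_filter]
  · rw [if_neg hc, if_neg hc, map_zero]

set_option linter.constructorNameAsVariable false in
/-- The enumerator of a code which agrees with the row space of `M` up to a permutation of the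
coordinates. -/
lemma aeval_swe_eq {D : Submodule (ZMod 32) (Fin 24 → ZMod 32)} (π : Equiv.Perm (Fin 24))
    (h : ∀ c, c ∈ D ↔ ∃ q, c = word q ∘ π) :
    aeval substPol (swe 2 5 D) = ∑ q, ∏ j, phi (word q j) := by
  rw [aeval_swe, ← Finset.sum_filter]
  symm
  refine Finset.sum_of_injOn (fun (q : Fin 12 → ZMod 32) => word q ∘ π) ?_ ?_ ?_ ?_
  · intro q _ q' _ hq
    have h2 : word q = word q' := π.surjective.injective_comp_right hq
    ext i
    rw [← word_apply q, ← word_apply q', h2]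
  · intro q _
    simp only [Finset.coe_filter, Finset.mem_univ, true_and, Set.mem_ofPred_eq]
    exact (h _).2 ⟨q, rfl⟩
  · intro c hc hc'
    simp only [Finset.mem_filter, Finset.mem_univ, true_and] at hc
    obtain ⟨q, hq⟩ := (h c).1 hc
    exact absurd ⟨q, by simp, hq.symm⟩ hc'
  · exact fun q _ => (Equiv.prod_comp π fun j => phi (word q j)).symm

/-! ### The generator polynomials -/

/-- The polynomial over `ℤ/Nℤ` with the given list of coefficients, the constant one first. -/
def ofL (N : ℕ) : List ℕ → Polynomial (ZMod N)
  | [] => 0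
  | a :: l => Polynomial.C (a : ZMod N) + Polynomial.X * ofL N l

lemma coeff_ofL (N : ℕ) (l : List ℕ) (n : ℕ) : (ofL N l).coeff n = (l.getD n 0 : ZMod N) := by
  induction l generalizing n with
  | nil => simp [ofL]
  | cons a l ih =>
    cases n with
    | zero => simp [ofL]
    | succ n => simp [ofL, ih]

lemma map_ofL {N N' : ℕ} (f : ZMod N →+* ZMod N') (l : List ℕ) :
    (ofL N l).map f = ofL N' l := by
  ext n
  simp [coeff_ofL]

lemma ofL_mul {N : ℕ} {l l' l'' : List ℕ}
    (h : ∀ n < l.length + l'.length + l''.length,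
      (∑ i ∈ Finset.range (n + 1), l.getD i 0 * l'.getD (n - i) 0) % N = l''.getD n 0 % N) :
    ofL N l * ofL N l' = ofL N l'' := by
  ext n
  rw [Polynomial.coeff_mul, Finset.Nat.sum_antidiagonal_eq_sum_range_succ_mk]
  simp only [coeff_ofL]
  rcases Nat.lt_or_ge n (l.length + l'.length + l''.length) with hn | hn
  · rw [← (ZMod.natCast_eq_natCast_iff' _ _ N).2 (h n hn)]
    push_cast
    rfl
  · rw [List.getD_eq_default l'' 0 (by omega), Nat.cast_zero]
    refine Finset.sum_eq_zero fun i _ => ?_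
    rcases Nat.lt_or_ge i l.length with hi | hi
    · rw [List.getD_eq_default l' 0 (by omega), Nat.cast_zero, mul_zero]
    · rw [List.getD_eq_default l 0 hi, Nat.cast_zero, zero_mul]

/-- A generator polynomial modulo `32`. -/
def Ga : List ℕ := [31, 22, 25, 4, 13, 21, 17, 6, 28, 20, 23, 1]

/-- The other generator polynomial modulo `32`. -/
def Gb : List ℕ := [31, 9, 12, 4, 26, 15, 11, 19, 28, 7, 10, 1]

lemma ofL_monic {N : ℕ} [Nontrivial (ZMod N)] {l : List ℕ} (hl : l.length = 12)
    (h : l.getD 11 0 = 1) : (ofL N l).Monic ∧ (ofL N l).natDegree = 11 := by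
  have h1 : (ofL N l).coeff 11 = 1 := by rw [coeff_ofL, h, Nat.cast_one]
  have h2 : (ofL N l).natDegree ≤ 11 := Polynomial.natDegree_le_iff_coeff_eq_zero.2 fun n hn => by
    rw [coeff_ofL, List.getD_eq_default _ _ (by omega), Nat.cast_zero]
  have h3 : (ofL N l).natDegree = 11 :=
    le_antisymm h2 (Polynomial.le_natDegree_of_ne_zero (by rw [h1]; exact one_ne_zero))
  exact ⟨by rw [Polynomial.Monic, Polynomial.leadingCoeff, h3, h1], h3⟩

instance : Nontrivial (ZMod 32) := ZMod.nontrivial_iff.2 (by norm_num)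

lemma factor : ofL 32 [31, 1] * (ofL 32 Ga * ofL 32 Gb) = Polynomial.X ^ 23 - 1 := by
  have h1 : ofL 32 Ga * ofL 32 Gb = ofL 32 (List.replicate 23 1) := ofL_mul (by decide +kernel)
  have h2 : ofL 32 [31, 1] * ofL 32 (List.replicate 23 1)
      = ofL 32 (31 :: (List.replicate 22 0 ++ [1])) := ofL_mul (by decide +kernel)
  rw [h1, h2]
  have h31 : ((31 : ℕ) : ZMod 32) = -1 := by decide
  simp only [ofL, List.replicate, List.cons_append, List.nil_append, h31, Nat.cast_zero,
    Nat.cast_one, Polynomial.C_0, Polynomial.C_1, Polynomial.C_neg]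
  ring

lemma eq_of_monic_dvd {R : Type*} [CommRing R] [Nontrivial R] {f g : Polynomial R} (hf : f.Monic)
    (hg : g.Monic) (hd : f.natDegree = g.natDegree) (h : f ∣ g) : f = g := by
  obtain ⟨k, rfl⟩ := h
  have hk : k.Monic := hf.of_mul_monic_left hg
  rw [hf.natDegree_mul hk] at hd
  rw [hk.natDegree_eq_zero.1 (by omega), mul_one]

/-- Coprimality lifts from `ℤ/2ℤ` to `ℤ/32ℤ`. -/
lemma isCoprime_lift (φ : ZMod 32 →+* ZMod 2) {f g : Polynomial (ZMod 32)}
    (h : IsCoprime (f.map φ) (g.map φ)) : IsCoprime f g := by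
  have hφ : Function.Surjective φ := ZMod.ringHom_surjective φ
  obtain ⟨a, b, hab⟩ := h
  obtain ⟨a, rfl⟩ := Polynomial.map_surjective φ hφ a
  obtain ⟨b, rfl⟩ := Polynomial.map_surjective φ hφ b
  have hker : ∀ x : ZMod 32, φ x = 0 → x ^ 5 = 0 := by
    rw [Subsingleton.elim φ (ZMod.castHom (by norm_num) (ZMod 2))]
    decide
  have hn : IsNilpotent (a * f + b * g - 1) := by
    rw [Polynomial.isNilpotent_iff]
    intro i
    refine ⟨5, hker _ ?_⟩
    rw [← Polynomial.coeff_map]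
    simp [hab]
  have hu : IsUnit (a * f + b * g) := by
    have := hn.isUnit_add_one
    rwa [sub_add_cancel] at this
  obtain ⟨u, hu⟩ := hu
  refine ⟨↑u⁻¹ * a, ↑u⁻¹ * b, ?_⟩
  rw [mul_assoc, mul_assoc, ← mul_add, ← hu, Units.inv_mul]

/-- Uniqueness of the Hensel lift of a factor of `X ^ 23 - 1`. -/
lemma lift_unique (φ : ZMod 32 →+* ZMod 2) {f g h : Polynomial (ZMod 32)}
    (hf : f.Monic) (hg : g.Monic) (hd : f.natDegree = g.natDegree)
    (hfd : f ∣ Polynomial.X ^ 23 - 1) (hgh : g * h = Polynomial.X ^ 23 - 1)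
    (he : f.map φ = g.map φ) : f = g := by
  refine eq_of_monic_dvd hf hg hd ?_
  have h23 : ((23 : ℕ) : ZMod 2) ≠ 0 := by decide
  have hc : IsCoprime f h := by
    apply isCoprime_lift φ
    rw [he]
    apply Polynomial.Separable.isCoprime
    rw [← Polynomial.map_mul, hgh]
    have : Fact (Nat.Prime 2) := ⟨Nat.prime_two⟩
    simp only [Polynomial.map_sub, Polynomial.map_pow, Polynomial.map_X, Polynomial.map_one]
    rw [Polynomial.X_pow_sub_one_separable_iff]
    exact h23
  exact hc.dvd_of_dvd_mul_right (hgh ▸ hfd)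

lemma generator_eq {g : Polynomial (ZMod 2)} (hg : IsQRFactor 2 g) {g5 : Polynomial (ZMod 32)}
    (hm : g5.Monic) (hd : g5.natDegree = 11) (hdvd : g5 ∣ Polynomial.X ^ 23 - 1)
    (φ : ZMod 32 →+* ZMod 2) (hmap : g5.map φ = g) : g5 = ofL 32 Ga ∨ g5 = ofL 32 Gb := by
  have : Fact (Nat.Prime 2) := ⟨Nat.prime_two⟩
  obtain ⟨gm, gd, gi, gdvd⟩ := hg
  have hfac : ofL 2 [31, 1] * (ofL 2 Ga * ofL 2 Gb) = Polynomial.X ^ 23 - 1 := by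
    have := congrArg (Polynomial.map φ) factor
    simpa [map_ofL] using this
  obtain ⟨ma, da⟩ := ofL_monic (N := 32) (l := Ga) rfl rfl
  obtain ⟨mb, db⟩ := ofL_monic (N := 32) (l := Gb) rfl rfl
  obtain ⟨ma', da'⟩ := ofL_monic (N := 2) (l := Ga) rfl rfl
  obtain ⟨mb', db'⟩ := ofL_monic (N := 2) (l := Gb) rfl rfl
  rw [← hfac] at gdvd
  rcases gi.prime.dvd_or_dvd gdvd with h | h
  · exfalso
    have h1 : (ofL 2 [31, 1]).natDegree ≤ 1 :=
      Polynomial.natDegree_le_iff_coeff_eq_zero.2 fun n hn => by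
        rw [coeff_ofL, List.getD_eq_default _ _ hn, Nat.cast_zero]
    have h0 : ofL 2 [31, 1] ≠ 0 := by
      intro h'
      have := congrArg (fun p => Polynomial.coeff p 1) h'
      simp [coeff_ofL] at this
    have := Polynomial.natDegree_le_of_dvd h h0
    omega
  rcases gi.prime.dvd_or_dvd h with h | h
  · left
    have e := eq_of_monic_dvd gm ma' (by omega) h
    refine lift_unique φ hm ma (by omega) hdvd (h := ofL 32 [31, 1] * ofL 32 Gb) ?_ ?_
    · rw [← factor]; ring
    · rw [hmap, e, map_ofL]
  · right
    have e := eq_of_monic_dvd gm mb' (by omega) h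
    refine lift_unique φ hm mb (by omega) hdvd (h := ofL 32 [31, 1] * ofL 32 Ga) ?_ ?_
    · rw [← factor]; ring
    · rw [hmap, e, map_ofL]

/-! ### The code as a row space -/

/-- The coefficients of the multiplier of the generator polynomial `G` in the codeword
`X ^ (k + 11) + ⋯` with all other terms of degree at most `10`, where `h` lists the coefficients of
the inverse power series of the reciprocal polynomial of `G`. -/
def quo (h : List ℕ) (k : ℕ) : List ℕ :=
  (List.range 12).map fun i => if i ≤ k then h.getD (k - i) 0 else 0

/-- The first 23 coordinates of row `i` of the generator matrix, permuted by `l`. -/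
def prow (l : List ℕ) (i : ℕ) : List ℕ := (List.range 23).map fun j => M i (l.getD j 0)

lemma M_sum : ∀ i < 12, (∑ j ∈ Finset.range 24, M i j) % 32 = 0 := by decide +kernel

/-- If the permuted rows of the generator matrix are multiples of the generator polynomial and the
systematic coordinates are moved to the positions `11, …, 22`, then the code is the permuted row
space. -/
lemma code_eq {D : Submodule (ZMod 32) (Fin 24 → ZMod 32)} {G l : List ℕ} (f : ℕ → List ℕ)
    (hG : G.length = 12) (hG1 : G.getD 11 0 = 1)
    (hGd : ofL 32 G ∣ Polynomial.X ^ 23 - 1)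
    (hD : ∀ c : Fin 24 → ZMod 32, c ∈ D ↔
      ((∃ f : Polynomial (ZMod 32), ∀ j : Fin 23,
          c (Fin.castSucc j) = ((f * ofL 32 G) %ₘ (Polynomial.X ^ 23 - 1)).coeff (j : ℕ)) ∧
        c (Fin.last 23) = - ∑ j : Fin 23, c (Fin.castSucc j)))
    (hf : ∀ i < 12, ofL 32 (f i) * ofL 32 G = ofL 32 (prow l i))
    (hlt : ∀ j < 24, l.getD j 0 < 24) (h23 : l.getD 23 0 = 23)
    (hinj : ∀ i < 24, ∀ j < 24, l.getD i 0 = l.getD j 0 → i = j)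
    (hsys : ∀ j < 23, 11 ≤ j → l.getD j 0 < 12) :
    ∃ π : Equiv.Perm (Fin 24), ∀ c, c ∈ D ↔ ∃ q, c = word q ∘ π := by
  let p : Fin 24 → Fin 24 := fun j => ⟨l.getD j 0, hlt j j.2⟩
  have hp : Function.Bijective p := by
    rw [← Finite.injective_iff_bijective]
    intro i j hij
    exact Fin.ext (hinj i i.2 j j.2 (congrArg Fin.val hij))
  obtain ⟨π, hπ⟩ : ∃ π : Equiv.Perm (Fin 24), ∀ j, ((π j : Fin 24) : ℕ) = l.getD j 0 :=
    ⟨Equiv.ofBijective p hp, fun j => rfl⟩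
  have hlast : π (Fin.last 23) = Fin.last 23 := by
    apply Fin.ext
    rw [hπ]
    exact h23
  obtain ⟨mG, dG⟩ := ofL_monic (N := 32) hG hG1
  have mX : (Polynomial.X ^ 23 - 1 : Polynomial (ZMod 32)).Monic :=
    Polynomial.monic_X_pow_sub_C 1 (by norm_num)
  have dX : (Polynomial.X ^ 23 - 1 : Polynomial (ZMod 32)).degree = 23 :=
    Polynomial.degree_X_pow_sub_C (by norm_num) 1
  -- the permuted rows belong to the code
  have hrow : ∀ i : Fin 12, (fun j => (M i (π j) : ZMod 32)) ∈ D := by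
    intro i
    rw [hD]
    constructor
    · refine ⟨ofL 32 (f i), fun j => ?_⟩
      have hdeg : (ofL 32 (prow l i)).degree
          < (Polynomial.X ^ 23 - 1 : Polynomial (ZMod 32)).degree := by
        rw [dX]
        refine (Polynomial.degree_lt_iff_coeff_zero _ 23).2 fun n hn => ?_
        rw [coeff_ofL, List.getD_eq_default _ _ (by simpa [prow] using hn), Nat.cast_zero]
      rw [hf i i.2, (Polynomial.modByMonic_eq_self_iff mX).2 hdeg, coeff_ofL, hπ]
      simp [prow, List.getD_eq_getElem?_getD]
    · rw [eq_neg_iff_add_eq_zero, add_comm,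
        ← Fin.sum_univ_castSucc (fun j => (M i (π j) : ZMod 32))]
      rw [Equiv.sum_comp π fun j => (M i j : ZMod 32), ← Finset.sum_range
        (fun j => (M i j : ZMod 32)), ← Nat.cast_sum, ZMod.natCast_eq_zero_iff]
      exact Nat.dvd_of_mod_eq_zero (M_sum i i.2)
  have hword : ∀ q, word q ∘ π ∈ D := by
    intro q
    have : word q ∘ π = ∑ i : Fin 12, q i • (fun j => (M i (π j) : ZMod 32)) := by
      ext j
      simp [word]
    rw [this]
    exact D.sum_mem fun i _ => D.smul_mem _ (hrow i)
  -- a codeword vanishing in the systematic coordinates is zero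
  have hzero : ∀ c ∈ D, (∀ i : Fin 12, c (π.symm (Fin.castLE (by norm_num) i)) = 0) → c = 0 := by
    intro c hc h0
    obtain ⟨⟨s, hs⟩, hl⟩ := (hD c).1 hc
    obtain ⟨r, hr⟩ : ∃ r, r = (s * ofL 32 G) %ₘ (Polynomial.X ^ 23 - 1) := ⟨_, rfl⟩
    have hdvd : ofL 32 G ∣ r := by
      have := Polynomial.modByMonic_add_div (s * ofL 32 G) (Polynomial.X ^ 23 - 1)
      rw [hr, eq_sub_of_add_eq this]
      exact dvd_sub (Dvd.intro_left _ rfl) (hGd.mul_right _)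
    have hdeg : r.degree < (ofL 32 G).degree := by
      rw [Polynomial.degree_eq_natDegree mG.ne_zero, dG]
      refine (Polynomial.degree_lt_iff_coeff_zero _ 11).2 fun n hn => ?_
      rcases Nat.lt_or_ge n 23 with h | h
      · have h1 := hs ⟨n, h⟩
        rw [← hr] at h1
        rw [← h1]
        have h2 : π.symm (Fin.castLE (by norm_num) (⟨l.getD n 0, hsys n h hn⟩ : Fin 12))
            = Fin.castSucc ⟨n, h⟩ := by
          rw [Equiv.symm_apply_eq]
          apply Fin.ext
          rw [hπ]
          rfl
        rw [← h2]
        exact h0 _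
      · rw [hr]
        apply Polynomial.coeff_eq_zero_of_degree_lt
        refine (Polynomial.degree_modByMonic_lt _ mX).trans_le ?_
        rw [dX]
        exact_mod_cast h
    have hr0 : r = 0 := by
      by_contra h
      exact mG.not_dvd_of_degree_lt h hdeg hdvd
    have hc0 : ∀ j : Fin 23, c (Fin.castSucc j) = 0 := fun j => by
      rw [hs j, ← hr, hr0, Polynomial.coeff_zero]
    ext j
    refine Fin.lastCases ?_ (fun j => hc0 j) j
    rw [hl, Finset.sum_eq_zero fun j _ => hc0 j, neg_zero]
    rfl
  refine ⟨π, fun c => ⟨fun hc => ?_, fun ⟨q, hq⟩ => hq ▸ hword q⟩⟩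
  refine ⟨fun i => c (π.symm (Fin.castLE (by norm_num) i)), ?_⟩
  rw [← sub_eq_zero]
  refine hzero _ (D.sub_mem hc (hword _)) fun i => ?_
  simp [word_apply]

lemma exists_perm {g5 : Polynomial (ZMod 32)} {D : Submodule (ZMod 32) (Fin 24 → ZMod 32)}
    (hg : g5 = ofL 32 Ga ∨ g5 = ofL 32 Gb)
    (hD : ∀ c : Fin 24 → ZMod 32, c ∈ D ↔
      ((∃ f : Polynomial (ZMod 32), ∀ j : Fin 23,
          c (Fin.castSucc j) = ((f * g5) %ₘ (Polynomial.X ^ 23 - 1)).coeff (j : ℕ)) ∧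
        c (Fin.last 23) = - ∑ j : Fin 23, c (Fin.castSucc j))) :
    ∃ π : Equiv.Perm (Fin 24), ∀ c, c ∈ D ↔ ∃ q, c = word q ∘ π := by
  rcases hg with rfl | rfl
  · -- the coordinates are shifted cyclically
    refine code_eq (l := [12, 13, 14, 15, 16, 17, 18, 19, 20, 21, 22, 0, 1, 2, 3, 4, 5, 6, 7, 8, 9,
      10, 11, 23]) (quo [1, 9, 29, 21, 23, 24, 4, 11, 10, 8, 29, 22]) rfl rfl ?_ hD ?_
      (by decide) rfl (by decide +kernel) (by decide +kernel)
    · rw [← factor]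
      exact Dvd.dvd.mul_left (dvd_mul_right _ _) _
    · intro i hi
      apply ofL_mul
      revert i
      decide +kernel
  · -- the coordinates are reversed
    refine code_eq (l := [22, 21, 20, 19, 18, 17, 16, 15, 14, 13, 12, 11, 10, 9, 8, 7, 6, 5, 4, 3, 2,
      1, 0, 23]) (fun i => quo [1, 22, 29, 8, 10, 11, 4, 24, 23, 21, 29, 9] (11 - i)) rfl rfl ?_
      hD ?_ (by decide) rfl (by decide +kernel) (by decide +kernel)
    · rw [← factor]
      exact Dvd.dvd.mul_left (dvd_mul_left _ _) _
    · intro i hi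
      apply ofL_mul
      revert i
      decide +kernel

end QR24

/-- The partial weight enumerator `D_{3,2}` for the binary lifted QR codes of length 24. -/
theorem stmt_8 (g : Polynomial (ZMod 2)) (hg : IsQRFactor 2 g)
    (g5 : Polynomial (ZMod 32)) (C5 : Submodule (ZMod 32) (Fin 24 → ZMod 32))
    (hC5 : IsLiftedQR (by norm_num : (2:ℕ) ∣ 32) g g5 C5) :
    divPart (((2:ℚ) ^ 24)⁻¹ •
        aeval (![X 0, X 1, X 2, X 5 - X 4, X 5 + X 4 - 2 * X 3, X 5 + X 4 + 2 * X 3] : Fin 6 → MvPolynomial (Fin 6) ℚ) (swe 2 5 C5))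
      0 3 =
      97152 * X 0 ^ 8 * X 3 ^ 8 *
        (-(X 1 ^ 4 * X 4 ^ 2 * X 5 ^ 2) + 2 * X 1 ^ 4 * X 2 * X 4 ^ 2 * X 5
          - X 1 ^ 4 * X 2 ^ 2 * X 4 ^ 2 + X 1 ^ 4 * X 4 ^ 4 - X 1 ^ 2 * X 2 ^ 2 * X 4 ^ 4) := by
  obtain ⟨hm, hd, hdvd, hmap, hD⟩ := hC5
  obtain ⟨π, hπ⟩ := QR24.exists_perm (QR24.generator_eq hg hm hd hdvd _ hmap) hD
  have h := QR24.aeval_swe_eq π hπ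
  rw [QR24.substPol] at h
  rw [h]
  exact QR24.divPart_sum_phi
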